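/- There exists a constant C > 0 depending only on the nonlinearity g (and not on Ω or on the flow u) with the following property: if τ is C² in Ω, continuous on the closure of Ω, solves −Δτ + ⟨u, ∇τ⟩ = 1 in Ω with τ = 0 on ∂Ω, and θ_u denotes the maximum of τ over the closure of Ω, then for every λ ∈ (0, C/θ_u] the explosion problem at parameter λ admits a minimal nonnegative classical solution. -/

import Mathlib

open Set MeasureTheory
open scoped RealInnerProductSpace

noncomputable section

/-- The Laplacian of a real-valued function on Euclidean space, computed as the sum of
the second partial derivatives in the coordinate directions. -/
def lapl {n : ℕ} (φ : EuclideanSpace ℝ (Fin n) → ℝ) (x : EuclideanSpace ℝ (Fin n)) : ℝ :=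
  ∑ i : Fin n, fderiv ℝ (fun y => fderiv ℝ φ y (EuclideanSpace.single i 1)) x
    (EuclideanSpace.single i 1)

/-- The divergence of a vector field on Euclidean space. -/
def dvg {n : ℕ} (u : EuclideanSpace ℝ (Fin n) → EuclideanSpace ℝ (Fin n))
    (x : EuclideanSpace ℝ (Fin n)) : ℝ :=
  ∑ i : Fin n, fderiv ℝ (fun y => u y i) x (EuclideanSpace.single i 1)

/-- A classical solution of the explosion problem `-Δφ + ⟨u, ∇φ⟩ = λ g(φ)` in `Ω`,
vanishing on `∂Ω`: `C²` in `Ω`, continuous on the closure of `Ω`. -/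
def IsClassicalSol {n : ℕ} (Ω : Set (EuclideanSpace ℝ (Fin n)))
    (u : EuclideanSpace ℝ (Fin n) → EuclideanSpace ℝ (Fin n)) (g : ℝ → ℝ) (lam : ℝ)
    (φ : EuclideanSpace ℝ (Fin n) → ℝ) : Prop :=
  (∀ x ∈ Ω, ContDiffAt ℝ 2 φ x) ∧ ContinuousOn φ (closure Ω) ∧
  (∀ x ∈ Ω, -lapl φ x + ⟪u x, gradient φ x⟫ = lam * g (φ x)) ∧
  (∀ x ∈ frontier Ω, φ x = 0)

/-- A nonnegative classical solution. -/
def IsNonnegSol {n : ℕ} (Ω : Set (EuclideanSpace ℝ (Fin n)))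
    (u : EuclideanSpace ℝ (Fin n) → EuclideanSpace ℝ (Fin n)) (g : ℝ → ℝ) (lam : ℝ)
    (φ : EuclideanSpace ℝ (Fin n) → ℝ) : Prop :=
  IsClassicalSol Ω u g lam φ ∧ ∀ x ∈ Ω, 0 ≤ φ x

/-- A minimal nonnegative classical solution: one that lies below every nonnegative
classical solution at the same parameter. -/
def IsMinimalSol {n : ℕ} (Ω : Set (EuclideanSpace ℝ (Fin n)))
    (u : EuclideanSpace ℝ (Fin n) → EuclideanSpace ℝ (Fin n)) (g : ℝ → ℝ) (lam : ℝ)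
    (φ : EuclideanSpace ℝ (Fin n) → ℝ) : Prop :=
  IsNonnegSol Ω u g lam φ ∧ ∀ v, IsNonnegSol Ω u g lam v → ∀ x ∈ Ω, φ x ≤ v x

/-!
With `M = 1/θ`, the function `M τ` is a supersolution, since `λ g(M τ) ≤ λ g(1) ≤ M`. It is also a
boundary barrier: any `φ` with `0 ≤ φ ≤ M τ` vanishes continuously on the boundary, so no boundary
regularity is needed.

Linear problems `-Δφ + ⟨u, ∇φ⟩ = h` with `0 ≤ h ≤ M` are solved weakly in `L²` by Hahn–Banach with
the sublinear functional `F ↦ ⟪M τ, F⁺⟫`: Kato's inequality for the adjoint operator gives the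
required domination, and the extension automatically satisfies `0 ≤ φ ≤ M τ`.

For interior regularity, average against `t⁻ⁿ η(·/t)`. The scale derivative of this kernel is the
Laplacian of a compactly supported kernel, so for a weak solution the averages converge at a power
rate as `t → 0`. This makes the solution Hölder continuous, then `C¹` with Hölder gradient, then
`C²`.

The monotone iteration started at `0` stays below every nonnegative solution by the maximum
principle, and its limit is the minimal solution.
-/

open Filter Topology TopologicalSpace InnerProductSpace
open scoped ContDiff Distributions Laplacian

variable {n : ℕ}

local notation "𝔼" n:max => EuclideanSpace ℝ (Fin n)

section PartialDerivatives

variable {f g : 𝔼 n → ℝ} {x : 𝔼 n} {s : Set (𝔼 n)} {k m : ℕ∞ω}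

/-- The `i`-th partial derivative, with the junk value `0` where `f` is not differentiable. -/
def partialDeriv (i : Fin n) (f : 𝔼 n → ℝ) (x : 𝔼 n) : ℝ :=
  fderiv ℝ f x (EuclideanSpace.single i 1)

lemma lapl_eq_sum (f : 𝔼 n → ℝ) : lapl f = fun x ↦ ∑ i, partialDeriv i (partialDeriv i f) x :=
  rfl

lemma dvg_eq_sum (u : 𝔼 n → 𝔼 n) : dvg u = fun x ↦ ∑ i, partialDeriv i (fun y ↦ u y i) x :=
  rfl

lemma fderiv_apply_eq_sum_partialDeriv (f : 𝔼 n → ℝ) (x v : 𝔼 n) :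
    fderiv ℝ f x v = ∑ i, v i * partialDeriv i f x := by
  conv_lhs => rw [← (EuclideanSpace.basisFun (Fin n) ℝ).sum_repr v]
  simp [partialDeriv]

lemma contDiffAt_partialDeriv (i : Fin n) (hf : ContDiffAt ℝ k f x) (h : m + 1 ≤ k) :
    ContDiffAt ℝ m (partialDeriv i f) x :=
  (hf.fderiv_right h).clm_apply contDiffAt_const

lemma contDiffOn_partialDeriv (hs : IsOpen s) (i : Fin n) (hf : ContDiffOn ℝ k f s)
    (h : m + 1 ≤ k) : ContDiffOn ℝ m (partialDeriv i f) s :=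
  hs.contDiffOn_iff.2 fun _ hx ↦
    contDiffAt_partialDeriv i (hf.contDiffAt (hs.mem_nhds hx)) h

lemma contDiff_partialDeriv (i : Fin n) (hf : ContDiff ℝ ∞ f) : ContDiff ℝ ∞ (partialDeriv i f) :=
  (hf.fderiv_right (m := ∞) (by simp)).clm_apply contDiff_const

lemma partialDeriv_congr (i : Fin n) (h : f =ᶠ[𝓝 x] g) :
    partialDeriv i f x = partialDeriv i g x := by
  rw [partialDeriv, h.fderiv_eq, partialDeriv]

lemma partialDeriv_mul (i : Fin n) (hf : DifferentiableAt ℝ f x) (hg : DifferentiableAt ℝ g x) :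
    partialDeriv i (fun y ↦ f y * g y) x = f x * partialDeriv i g x + partialDeriv i f x * g x := by
  simp [partialDeriv, fderiv_fun_mul hf hg, mul_comm]

lemma partialDeriv_comp {j : ℝ → ℝ} (i : Fin n) (hj : DifferentiableAt ℝ j (f x))
    (hf : DifferentiableAt ℝ f x) :
    partialDeriv i (fun y ↦ j (f y)) x = deriv j (f x) * partialDeriv i f x := by
  have h : HasFDerivAt (fun y ↦ j (f y)) _ x := hj.hasDerivAt.comp_hasFDerivAt x hf.hasFDerivAt
  simp [partialDeriv, h.fderiv]

lemma tsupport_partialDeriv_subset (i : Fin n) (f : 𝔼 n → ℝ) :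
    tsupport (partialDeriv i f) ⊆ tsupport f :=
  tsupport_fderiv_apply_subset ℝ _

lemma lapl_eq_laplacian (hf : ContDiffAt ℝ 2 f x) : lapl f x = Δ f x := by
  rw [laplacian_eq_iteratedFDeriv_orthonormalBasis f (EuclideanSpace.basisFun (Fin n) ℝ)]
  refine Finset.sum_congr rfl fun i _ ↦ ?_
  have hdf : DifferentiableAt ℝ (fderiv ℝ f) x :=
    (hf.fderiv_right (m := 1) (by norm_num)).differentiableAt one_ne_zero
  simp [iteratedFDeriv_two_apply, fderiv_clm_apply hdf (differentiableAt_const _)]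

lemma lapl_eventuallyEq_zero (h : f =ᶠ[𝓝 x] 0) : lapl f x = 0 := by
  have h0 : f =ᶠ[𝓝 x] fun _ ↦ (0 : ℝ) := h
  rw [lapl_eq_laplacian (contDiffAt_const.congr_of_eventuallyEq h0),
    (laplacian_congr_nhds h0).eq_of_nhds, ← lapl_eq_laplacian contDiffAt_const]
  simp [lapl]

lemma lapl_add (hf : ContDiffAt ℝ 2 f x) (hg : ContDiffAt ℝ 2 g x) :
    lapl (f + g) x = lapl f x + lapl g x := by
  have hfg : ContDiffAt ℝ 2 (f + g) x := hf.add hg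
  rw [lapl_eq_laplacian hf, lapl_eq_laplacian hg, lapl_eq_laplacian hfg, hf.laplacian_add hg]

lemma lapl_const_smul (c : ℝ) (hf : ContDiffAt ℝ 2 f x) : lapl (c • f) x = c * lapl f x := by
  have hcf : ContDiffAt ℝ 2 (c • f) x := contDiffAt_const.smul hf
  rw [lapl_eq_laplacian hf, lapl_eq_laplacian hcf, laplacian_smul c hf, smul_eq_mul]

lemma lapl_comp {j : ℝ → ℝ} (hj : ContDiff ℝ 2 j) (hf : ContDiffAt ℝ 2 f x) :
    lapl (fun y ↦ j (f y)) x =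
      deriv j (f x) * lapl f x + deriv (deriv j) (f x) * ∑ i, partialDeriv i f x ^ 2 := by
  have hj' : Differentiable ℝ j := hj.differentiable two_ne_zero
  have hj'' : Differentiable ℝ (deriv j) :=
    ((contDiff_succ_iff_deriv (n := 1)).1 hj).2.2.differentiable one_ne_zero
  have hfx : DifferentiableAt ℝ f x := hf.differentiableAt two_ne_zero
  simp only [lapl_eq_sum, Finset.mul_sum, ← Finset.sum_add_distrib]
  refine Finset.sum_congr rfl fun i _ ↦ ?_
  have hgrad : partialDeriv i (fun y ↦ j (f y)) =ᶠ[𝓝 x]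
      fun y ↦ deriv j (f y) * partialDeriv i f y := by
    filter_upwards [hf.eventually (by simp)] with y hy
    exact partialDeriv_comp i (hj' _) (hy.differentiableAt two_ne_zero)
  have hdj : DifferentiableAt ℝ (fun y ↦ deriv j (f y)) x := (hj'' _).comp x hfx
  rw [partialDeriv_congr i hgrad, partialDeriv_mul i hdj
    ((contDiffAt_partialDeriv (m := 1) i hf (by norm_num)).differentiableAt one_ne_zero),
    partialDeriv_comp i (hj'' _) hfx]
  ring

lemma continuousOn_lapl (hs : IsOpen s) (hf : ContDiffOn ℝ 2 f s) : ContinuousOn (lapl f) s := by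
  rw [lapl_eq_sum]
  exact continuousOn_finsetSum _ fun i _ ↦ (contDiffOn_partialDeriv (m := 0) hs i
    (contDiffOn_partialDeriv (m := 1) hs i hf (by norm_num)) (by norm_num)).continuousOn

end PartialDerivatives

section LocalMin

lemma deriv_deriv_nonneg_of_isLocalMin {f : ℝ → ℝ} {a : ℝ} (hf : ContinuousAt f a)
    (hm : IsLocalMin f a) : 0 ≤ deriv (deriv f) a := by
  by_contra! hneg
  have hmax := isLocalMax_of_deriv_deriv_neg hneg hm.deriv_eq_zero hf
  have hconst : f =ᶠ[𝓝 a] fun _ ↦ f a := by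
    filter_upwards [hm, hmax] with y hmin hmax using le_antisymm hmax hmin
  simp [hconst.deriv.deriv_eq] at hneg

lemma lapl_nonneg_of_isLocalMin {f : 𝔼 n → ℝ} {x : 𝔼 n} (hf : ContDiffAt ℝ 2 f x)
    (hm : IsLocalMin f x) : 0 ≤ lapl f x := by
  rw [lapl_eq_sum]
  refine Finset.sum_nonneg fun i _ ↦ ?_
  set c : ℝ → 𝔼 n := fun s ↦ x + s • EuclideanSpace.single i 1 with hc
  have hc0 : c 0 = x := by simp [hc]
  have hcont : Tendsto c (𝓝 0) (𝓝 x) := hc0 ▸ (by fun_prop : Continuous c).tendsto 0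
  have hderiv (g : 𝔼 n → ℝ) (s : ℝ) (hg : DifferentiableAt ℝ g (c s)) :
      HasDerivAt (g ∘ c) (partialDeriv i g (c s)) s :=
    hg.hasFDerivAt.comp_hasDerivAt s
      (by simpa [hc] using
        ((hasDerivAt_id s).smul_const (EuclideanSpace.single i (1 : ℝ))).const_add x)
  have hfirst : deriv (f ∘ c) =ᶠ[𝓝 0] partialDeriv i f ∘ c := by
    filter_upwards [hcont.eventually (hf.eventually (by simp))] with s hs
    exact (hderiv f s (hs.differentiableAt two_ne_zero)).deriv
  have hsecond : deriv (deriv (f ∘ c)) 0 = partialDeriv i (partialDeriv i f) x := by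
    have hdiff : DifferentiableAt ℝ (partialDeriv i f) (c 0) := hc0 ▸
      (contDiffAt_partialDeriv (m := 1) i hf (by norm_num)).differentiableAt one_ne_zero
    rw [hfirst.deriv_eq, (hderiv _ 0 hdiff).deriv, hc0]
  rw [← hsecond]
  refine deriv_deriv_nonneg_of_isLocalMin ?_ ?_
  · exact (hc0 ▸ hf.continuousAt : ContinuousAt f (c 0)).comp (by fun_prop)
  · simpa [IsLocalMin, IsMinFilter, hc0] using hcont.eventually hm

end LocalMin

section AdvectionDiffusion

/-- The advection-diffusion operator `-Δ + ⟨u, ∇·⟩`. -/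
def advDiff (u : 𝔼 n → 𝔼 n) (φ : 𝔼 n → ℝ) (x : 𝔼 n) : ℝ :=
  -lapl φ x + ⟪u x, gradient φ x⟫

/-- The formal adjoint `ψ ↦ -Δψ - ⟨u, ∇ψ⟩ - (div u) ψ` of the advection-diffusion operator. -/
def adjAdvDiff (u : 𝔼 n → 𝔼 n) (ψ : 𝔼 n → ℝ) (x : 𝔼 n) : ℝ :=
  -lapl ψ x - fderiv ℝ ψ x (u x) - dvg u x * ψ x

variable {u : 𝔼 n → 𝔼 n} {f g ψ : 𝔼 n → ℝ} {x : 𝔼 n} {s : Set (𝔼 n)}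

lemma advDiff_eq (u : 𝔼 n → 𝔼 n) (φ : 𝔼 n → ℝ) (x : 𝔼 n) :
    advDiff u φ x = -lapl φ x + fderiv ℝ φ x (u x) := by
  rw [advDiff, real_inner_comm, inner_gradient_left]

lemma advDiff_add_const_smul (c : ℝ) (hf : ContDiffAt ℝ 2 f x) (hg : ContDiffAt ℝ 2 g x) :
    advDiff u (f + c • g) x = advDiff u f x + c * advDiff u g x := by
  have hcg : ContDiffAt ℝ 2 (c • g) x := contDiffAt_const.smul hg
  simp only [advDiff_eq, lapl_add hf hcg, lapl_const_smul c hg,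
    fderiv_add (hf.differentiableAt two_ne_zero) (hcg.differentiableAt two_ne_zero),
    fderiv_const_smul (hg.differentiableAt two_ne_zero), add_apply, smul_apply, smul_eq_mul]
  ring

lemma adjAdvDiff_add (hf : ContDiffAt ℝ 2 f x) (hg : ContDiffAt ℝ 2 g x) :
    adjAdvDiff u (f + g) x = adjAdvDiff u f x + adjAdvDiff u g x := by
  simp only [adjAdvDiff, lapl_add hf hg, Pi.add_apply, add_apply,
    fderiv_add (hf.differentiableAt two_ne_zero) (hg.differentiableAt two_ne_zero)]
  ring

lemma adjAdvDiff_const_smul (c : ℝ) (hf : ContDiffAt ℝ 2 f x) :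
    adjAdvDiff u (c • f) x = c * adjAdvDiff u f x := by
  simp only [adjAdvDiff, lapl_const_smul c hf, Pi.smul_apply, smul_apply, smul_eq_mul,
    fderiv_const_smul (hf.differentiableAt two_ne_zero)]
  ring

lemma adjAdvDiff_comp {j : ℝ → ℝ} (hj : ContDiff ℝ 2 j) (hf : ContDiffAt ℝ 2 f x) :
    adjAdvDiff u (fun y ↦ j (f y)) x = deriv j (f x) * adjAdvDiff u f x
      - deriv (deriv j) (f x) * ∑ i, partialDeriv i f x ^ 2
      + dvg u x * (f x * deriv j (f x) - j (f x)) := by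
  have hgrad : fderiv ℝ (fun y ↦ j (f y)) x (u x) = deriv j (f x) * fderiv ℝ f x (u x) := by
    simp only [fderiv_apply_eq_sum_partialDeriv, Finset.mul_sum,
      partialDeriv_comp _ (hj.differentiable two_ne_zero _) (hf.differentiableAt two_ne_zero),
      mul_left_comm]
  rw [adjAdvDiff, lapl_comp hj hf, hgrad, adjAdvDiff]
  ring

lemma adjAdvDiff_eq_zero_of_notMem_tsupport (hx : x ∉ tsupport ψ) : adjAdvDiff u ψ x = 0 := by
  have h := notMem_tsupport_iff_eventuallyEq.1 hx
  simp [adjAdvDiff, lapl_eventuallyEq_zero h, h.fderiv_eq, h.eq_of_nhds]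

lemma tsupport_adjAdvDiff_subset (u : 𝔼 n → 𝔼 n) (ψ : 𝔼 n → ℝ) :
    tsupport (adjAdvDiff u ψ) ⊆ tsupport ψ :=
  closure_minimal (fun _ hx ↦ not_imp_comm.1 adjAdvDiff_eq_zero_of_notMem_tsupport hx)
    (isClosed_tsupport ψ)

lemma continuousOn_fderiv_apply (hs : IsOpen s) (hu : ContinuousOn u s) (hf : ContDiffOn ℝ 1 f s) :
    ContinuousOn (fun x ↦ fderiv ℝ f x (u x)) s :=
  (hf.continuousOn_fderiv_of_isOpen hs le_rfl).clm_apply hu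

lemma continuousOn_dvg (hs : IsOpen s) (hu : ContDiffOn ℝ 1 u s) : ContinuousOn (dvg u) s := by
  rw [dvg_eq_sum]
  exact continuousOn_finsetSum _ fun i _ ↦
    (contDiffOn_partialDeriv (m := 0) hs i (contDiffOn_euclidean.1 hu i) (by norm_num)).continuousOn

lemma continuousOn_adjAdvDiff (hs : IsOpen s) (hu : ContDiffOn ℝ 1 u s) (hψ : ContDiffOn ℝ 2 ψ s) :
    ContinuousOn (adjAdvDiff u ψ) s :=
  ((continuousOn_lapl hs hψ).neg.sub
    (continuousOn_fderiv_apply hs hu.continuousOn (hψ.of_le (by norm_num)))).sub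
    ((continuousOn_dvg hs hu).mul hψ.continuousOn)

end AdvectionDiffusion

section TestFunctions

variable {Ω : Opens (𝔼 n)} {u : 𝔼 n → 𝔼 n} {f : 𝔼 n → ℝ}

/-- The `i`-th partial derivative, as an operation on test functions. -/
def testPartial (i : Fin n) (ψ : 𝓓(Ω, ℝ)) : 𝓓(Ω, ℝ) :=
  ⟨partialDeriv i ψ, contDiff_partialDeriv i ψ.contDiff,
    ψ.hasCompactSupport.mono' ((subset_tsupport _).trans (tsupport_partialDeriv_subset i ψ)),
    (tsupport_partialDeriv_subset i ψ).trans ψ.tsupport_subset⟩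

lemma coe_testPartial (i : Fin n) (ψ : 𝓓(Ω, ℝ)) : ⇑(testPartial i ψ) = partialDeriv i ψ := rfl

lemma contDiff_two_test (ψ : 𝓓(Ω, ℝ)) : ContDiff ℝ 2 ψ :=
  ψ.contDiff.of_le (WithTop.coe_le_coe.2 le_top)

lemma differentiable_test (ψ : 𝓓(Ω, ℝ)) : Differentiable ℝ ψ := ψ.contDiff.differentiable (by simp)

lemma integrable_mul_of_tsupport_subset {g : 𝔼 n → ℝ} (hf : ContinuousOn f Ω)
    (hg : ContinuousOn g Ω) (hgc : HasCompactSupport g) (hgs : tsupport g ⊆ Ω) :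
    Integrable (fun x ↦ f x * g x) :=
  have hcont := (hf.mul hg).continuous_of_tsupport_subset Ω.isOpen
    ((closure_mono (Function.support_mul_subset_right f g)).trans hgs)
  hcont.integrable_of_hasCompactSupport hgc.mul_left

lemma integrable_mul_test (hf : ContinuousOn f Ω) (ψ : 𝓓(Ω, ℝ)) :
    Integrable (fun x ↦ f x * ψ x) :=
  integrable_mul_of_tsupport_subset hf ψ.continuous.continuousOn ψ.hasCompactSupport
    ψ.tsupport_subset

lemma integral_mul_partialDeriv (hf : ContDiffOn ℝ 1 f Ω) (ψ : 𝓓(Ω, ℝ)) (i : Fin n) :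
    ∫ x, f x * partialDeriv i ψ x = -∫ x, partialDeriv i f x * ψ x :=
  integral_mul_fderiv_eq_neg_fderiv_mul_of_integrable
    (integrable_mul_test (contDiffOn_partialDeriv (m := 0) Ω.isOpen i hf (by simp)).continuousOn ψ)
    (integrable_mul_test hf.continuousOn (testPartial i ψ))
    (integrable_mul_test hf.continuousOn ψ)
    (fun _ hx ↦ (hf.contDiffAt (Ω.isOpen.mem_nhds (ψ.tsupport_subset hx))).differentiableAt
      one_ne_zero)
    fun x _ ↦ differentiable_test ψ x

lemma integral_mul_lapl (hf : ContDiffOn ℝ 2 f Ω) (ψ : 𝓓(Ω, ℝ)) :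
    ∫ x, f x * lapl ψ x = ∫ x, lapl f x * ψ x := by
  have hf' (i : Fin n) : ContDiffOn ℝ 1 (partialDeriv i f) Ω :=
    contDiffOn_partialDeriv Ω.isOpen i hf (by norm_num)
  have hf'' (i : Fin n) : ContinuousOn (partialDeriv i (partialDeriv i f)) Ω :=
    (contDiffOn_partialDeriv (m := 0) Ω.isOpen i (hf' i) (by simp)).continuousOn
  simp only [lapl_eq_sum, Finset.mul_sum, Finset.sum_mul, ← coe_testPartial]
  rw [integral_finsetSum _ fun i _ ↦ integrable_mul_test hf.continuousOn
      (testPartial i (testPartial i ψ)),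
    integral_finsetSum _ fun i _ ↦ integrable_mul_test (hf'' i) ψ]
  refine Finset.sum_congr rfl fun i _ ↦ ?_
  rw [coe_testPartial i (testPartial i ψ), integral_mul_partialDeriv (hf.of_le (by norm_num)),
    coe_testPartial, integral_mul_partialDeriv (hf' i), neg_neg]

lemma integral_sum_mul_partialDeriv {a : Fin n → 𝔼 n → ℝ} (ha : ∀ i, ContDiffOn ℝ 1 (a i) Ω)
    (ψ : 𝓓(Ω, ℝ)) :
    ∫ x, ∑ i, a i x * partialDeriv i ψ x = -∫ x, (∑ i, partialDeriv i (a i) x) * ψ x := by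
  have ha' (i : Fin n) : ContinuousOn (partialDeriv i (a i)) Ω :=
    (contDiffOn_partialDeriv (m := 0) Ω.isOpen i (ha i) (by simp)).continuousOn
  simp only [Finset.sum_mul, ← coe_testPartial]
  rw [integral_finsetSum _ fun i _ ↦ integrable_mul_test (ha i).continuousOn (testPartial i ψ),
    integral_finsetSum _ fun i _ ↦ integrable_mul_test (ha' i) ψ, ← Finset.sum_neg_distrib]
  exact Finset.sum_congr rfl fun i _ ↦ integral_mul_partialDeriv (ha i) ψ i

lemma sum_partialDeriv_mul_coord {x : 𝔼 n} (hf : DifferentiableAt ℝ f x)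
    (hu : DifferentiableAt ℝ u x) :
    ∑ i, partialDeriv i (fun y ↦ f y * u y i) x = f x * dvg u x + fderiv ℝ f x (u x) := by
  rw [fderiv_apply_eq_sum_partialDeriv, dvg_eq_sum, Finset.mul_sum, ← Finset.sum_add_distrib]
  refine Finset.sum_congr rfl fun i _ ↦ ?_
  rw [partialDeriv_mul i hf (differentiableAt_euclidean.1 hu i), mul_comm (u x i)]

lemma hasCompactSupport_adjAdvDiff (u : 𝔼 n → 𝔼 n) (ψ : 𝓓(Ω, ℝ)) :
    HasCompactSupport (adjAdvDiff u ψ) :=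
  ψ.hasCompactSupport.mono' ((subset_tsupport _).trans (tsupport_adjAdvDiff_subset u ψ))

lemma continuous_adjAdvDiff (hu : ContDiffOn ℝ 1 u Ω) (ψ : 𝓓(Ω, ℝ)) :
    Continuous (adjAdvDiff u ψ) :=
  have hcont := continuousOn_adjAdvDiff Ω.isOpen hu (contDiff_two_test ψ).contDiffOn
  hcont.continuous_of_tsupport_subset Ω.isOpen
    ((tsupport_adjAdvDiff_subset u ψ).trans ψ.tsupport_subset)

lemma integrable_mul_adjAdvDiff (hu : ContDiffOn ℝ 1 u Ω) (hf : ContinuousOn f Ω) (ψ : 𝓓(Ω, ℝ)) :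
    Integrable (fun x ↦ f x * adjAdvDiff u ψ x) :=
  integrable_mul_of_tsupport_subset hf (continuous_adjAdvDiff hu ψ).continuousOn
    (hasCompactSupport_adjAdvDiff u ψ) ((tsupport_adjAdvDiff_subset u ψ).trans ψ.tsupport_subset)

lemma integrable_mul_lapl (hf : ContinuousOn f Ω) (ψ : 𝓓(Ω, ℝ)) :
    Integrable (fun x ↦ f x * lapl ψ x) := by
  simp only [lapl_eq_sum, Finset.mul_sum]
  exact integrable_finsetSum _ fun i _ ↦ integrable_mul_test hf (testPartial i (testPartial i ψ))

lemma integrable_mul_drift (hu : ContinuousOn u Ω) (hf : ContinuousOn f Ω) (ψ : 𝓓(Ω, ℝ)) :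
    Integrable (fun x ↦ f x * fderiv ℝ ψ x (u x)) := by
  simp only [fderiv_apply_eq_sum_partialDeriv, Finset.mul_sum, ← mul_assoc]
  exact integrable_finsetSum _ fun i _ ↦
    integrable_mul_test (hf.mul (by fun_prop)) (testPartial i ψ)

lemma integral_mul_drift (hu : ContDiffOn ℝ 1 u Ω) (hf : ContDiffOn ℝ 1 f Ω) (ψ : 𝓓(Ω, ℝ)) :
    ∫ x, f x * fderiv ℝ ψ x (u x) =
      -∫ x, (f x * dvg u x + fderiv ℝ f x (u x)) * ψ x := by
  have hfu (i : Fin n) : ContDiffOn ℝ 1 (fun y ↦ f y * u y i) Ω :=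
    hf.mul (contDiffOn_euclidean.1 hu i)
  calc ∫ x, f x * fderiv ℝ ψ x (u x) = ∫ x, ∑ i, f x * u x i * partialDeriv i ψ x := by
        simp only [fderiv_apply_eq_sum_partialDeriv, Finset.mul_sum, mul_assoc]
    _ = -∫ x, (∑ i, partialDeriv i (fun y ↦ f y * u y i) x) * ψ x :=
        integral_sum_mul_partialDeriv hfu ψ
    _ = _ := by
        congr! 3 with x
        by_cases hx : x ∈ Ω
        · rw [sum_partialDeriv_mul_coord
            ((hf.contDiffAt (Ω.isOpen.mem_nhds hx)).differentiableAt one_ne_zero)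
            ((hu.contDiffAt (Ω.isOpen.mem_nhds hx)).differentiableAt one_ne_zero)]
        · simp [image_eq_zero_of_notMem_tsupport fun h ↦ hx (ψ.tsupport_subset h)]

lemma integral_mul_adjAdvDiff (hu : ContDiffOn ℝ 1 u Ω) (hf : ContDiffOn ℝ 2 f Ω) (ψ : 𝓓(Ω, ℝ)) :
    ∫ x, f x * adjAdvDiff u ψ x = ∫ x, advDiff u f x * ψ x := by
  have hf1 : ContDiffOn ℝ 1 f Ω := hf.of_le (by norm_num)
  have hf0 : ContinuousOn f Ω := hf.continuousOn
  have hfdvg : ContinuousOn (fun x ↦ f x * dvg u x) Ω := hf0.mul (continuousOn_dvg Ω.isOpen hu)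
  have hfu := continuousOn_fderiv_apply Ω.isOpen hu.continuousOn hf1
  have hdvg := integrable_mul_test hfdvg ψ
  have hadj : ∫ x, f x * adjAdvDiff u ψ x = -(∫ x, f x * lapl ψ x)
      - (∫ x, f x * fderiv ℝ ψ x (u x)) - ∫ x, f x * dvg u x * ψ x := by
    have hlapl := integrable_mul_lapl hf0 ψ
    have hdrift := integrable_mul_drift hu.continuousOn hf0 ψ
    simp only [adjAdvDiff, mul_sub, mul_neg, ← mul_assoc]
    rw [integral_sub (by exact hlapl.neg.sub hdrift) hdvg, integral_sub (by exact hlapl.neg) hdrift,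
      integral_neg]
  have hadv : ∫ x, advDiff u f x * ψ x =
      -(∫ x, lapl f x * ψ x) + ∫ x, fderiv ℝ f x (u x) * ψ x := by
    have hlapl := integrable_mul_test (continuousOn_lapl Ω.isOpen hf) ψ
    simp only [advDiff_eq, add_mul, neg_mul]
    rw [integral_add (by exact hlapl.neg) (integrable_mul_test hfu ψ), integral_neg]
  have hdrift := integral_mul_drift hu hf1 ψ
  simp only [add_mul] at hdrift
  rw [integral_add hdvg (integrable_mul_test hfu ψ)] at hdrift
  rw [hadj, hadv, integral_mul_lapl hf, hdrift]
  ring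

end TestFunctions

section DirichletSolutions

/-- `φ` solves `-Δφ + ⟨u, ∇φ⟩ = h` classically in `Ω` and vanishes on the boundary; the expected
exit time from `Ω` is the case `h = 1`. -/
structure IsDirichletSol (Ω : Opens (𝔼 n)) (u : 𝔼 n → 𝔼 n) (h φ : 𝔼 n → ℝ) : Prop where
  contDiffOn : ContDiffOn ℝ 2 φ Ω
  continuousOn : ContinuousOn φ (closure Ω)
  advDiff_eq : ∀ x ∈ Ω, advDiff u φ x = h x
  eq_zero : ∀ x ∈ frontier (Ω : Set (𝔼 n)), φ x = 0

variable {Ω : Opens (𝔼 n)} {u : 𝔼 n → 𝔼 n} {h k τ v w : 𝔼 n → ℝ} {x : 𝔼 n}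

lemma IsDirichletSol.contDiffAt (hv : IsDirichletSol Ω u h v) (hx : x ∈ Ω) : ContDiffAt ℝ 2 v x :=
  hv.contDiffOn.contDiffAt (Ω.isOpen.mem_nhds hx)

lemma isClassicalSol_iff {g : ℝ → ℝ} {lam : ℝ} :
    IsClassicalSol Ω u g lam v ↔ IsDirichletSol Ω u (fun x ↦ lam * g (v x)) v := by
  refine ⟨fun ⟨hd, hc, he, hb⟩ ↦ ⟨Ω.isOpen.contDiffOn_iff.2 fun {y} hy ↦ hd y hy, hc, he, hb⟩,
    fun hv ↦ ⟨fun _ hx ↦ hv.contDiffAt hx, hv.continuousOn, hv.advDiff_eq, hv.eq_zero⟩⟩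

lemma nonneg_of_advDiff_pos (hΩ : Bornology.IsBounded (Ω : Set (𝔼 n))) (hv : ContDiffOn ℝ 2 v Ω)
    (hvc : ContinuousOn v (closure Ω)) (hpos : ∀ x ∈ Ω, 0 < advDiff u v x)
    (hbdry : ∀ x ∈ frontier (Ω : Set (𝔼 n)), 0 ≤ v x) (hx : x ∈ closure (Ω : Set (𝔼 n))) :
    0 ≤ v x := by
  obtain ⟨y, hy, hmin⟩ := hΩ.isCompact_closure.exists_isMinOn ⟨x, hx⟩ hvc
  refine le_trans ?_ (hmin hx)
  by_contra! hneg
  have hyΩ : y ∈ Ω := by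
    by_contra hyΩ
    exact (hbdry y ⟨hy, by rwa [Ω.isOpen.interior_eq]⟩).not_gt hneg
  have hlocal : IsLocalMin v y :=
    hmin.isLocalMin (mem_of_superset (Ω.isOpen.mem_nhds hyΩ) subset_closure)
  have hlapl := lapl_nonneg_of_isLocalMin (hv.contDiffAt (Ω.isOpen.mem_nhds hyΩ)) hlocal
  have := hpos y hyΩ
  rw [advDiff_eq, hlocal.fderiv_eq_zero, zero_apply] at this
  linarith

lemma le_of_forall_pos_le_add_mul {a b c : ℝ} (h : ∀ ε > 0, a ≤ b + ε * c) : a ≤ b := by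
  have hlim : Tendsto (fun ε ↦ b + ε * c) (𝓝[>] 0) (𝓝 (b + 0 * c)) :=
    tendsto_nhdsWithin_of_tendsto_nhds (Continuous.tendsto (by fun_prop) 0)
  simpa using ge_of_tendsto hlim (eventually_mem_nhdsWithin.mono h)

lemma IsDirichletSol.nonneg (hΩ : Bornology.IsBounded (Ω : Set (𝔼 n)))
    (hτ : IsDirichletSol Ω u 1 τ) (hx : x ∈ closure (Ω : Set (𝔼 n))) : 0 ≤ τ x :=
  nonneg_of_advDiff_pos (u := u) hΩ hτ.contDiffOn hτ.continuousOn
    (fun y hy ↦ by simp [hτ.advDiff_eq y hy]) (fun y hy ↦ (hτ.eq_zero y hy).ge) hx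

lemma IsDirichletSol.le_of_le (hΩ : Bornology.IsBounded (Ω : Set (𝔼 n)))
    (hτ : IsDirichletSol Ω u 1 τ) (hv : IsDirichletSol Ω u h v) (hw : IsDirichletSol Ω u k w)
    (hhk : ∀ x ∈ Ω, h x ≤ k x) (hx : x ∈ closure (Ω : Set (𝔼 n))) : v x ≤ w x := by
  refine le_of_forall_pos_le_add_mul (c := τ x) fun ε hε ↦ ?_
  suffices 0 ≤ (w + ε • τ + (-1 : ℝ) • v) x by
    rw [Pi.add_apply, Pi.add_apply, Pi.smul_apply, Pi.smul_apply, smul_eq_mul, smul_eq_mul] at this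
    linarith
  refine nonneg_of_advDiff_pos (u := u) hΩ
    ((hw.contDiffOn.add (hτ.contDiffOn.const_smul ε)).add (hv.contDiffOn.const_smul (-1 : ℝ)))
    ((hw.continuousOn.add (hτ.continuousOn.const_smul ε)).add (hv.continuousOn.const_smul (-1 : ℝ)))
    (fun y hy ↦ ?_) (fun y hy ↦ by simp [hv.eq_zero y hy, hw.eq_zero y hy, hτ.eq_zero y hy]) hx
  have hwτ : ContDiffAt ℝ 2 (w + ε • τ) y :=
    (hw.contDiffAt hy).add (contDiffAt_const.smul (hτ.contDiffAt hy))
  rw [advDiff_add_const_smul _ hwτ (hv.contDiffAt hy),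
    advDiff_add_const_smul _ (hw.contDiffAt hy) (hτ.contDiffAt hy), hv.advDiff_eq y hy,
    hw.advDiff_eq y hy, hτ.advDiff_eq y hy, Pi.one_apply]
  linarith [hhk y hy]

end DirichletSolutions

section Kato

/-- A smooth convex approximation of `s ↦ max s 0`, vanishing at `0`, with error of order `δ`. -/
def smoothPosPart (δ s : ℝ) : ℝ := (√(s ^ 2 + δ ^ 2) - δ + s) / 2

variable {δ : ℝ} {Ω : Opens (𝔼 n)} {u : 𝔼 n → 𝔼 n} {τ : 𝔼 n → ℝ} {x : 𝔼 n}

lemma smoothPosPart_zero (hδ : 0 < δ) : smoothPosPart δ 0 = 0 := by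
  simp [smoothPosPart, Real.sqrt_sq hδ.le]

lemma max_zero_sub_le_smoothPosPart (δ s : ℝ) : max s 0 - δ / 2 ≤ smoothPosPart δ s := by
  have hs : |s| ≤ √(s ^ 2 + δ ^ 2) := Real.abs_le_sqrt (by nlinarith)
  have hmax : max s 0 ≤ (√(s ^ 2 + δ ^ 2) + s) / 2 :=
    max_le (by linarith [le_abs_self s]) (by linarith [neg_abs_le s])
  rw [smoothPosPart]
  linarith

lemma hasDerivAt_sqrt_sq_add_sq (hδ : 0 < δ) (s : ℝ) :
    HasDerivAt (fun t ↦ √(t ^ 2 + δ ^ 2)) (s / √(s ^ 2 + δ ^ 2)) s := by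
  have hsq : HasDerivAt (fun t : ℝ ↦ t ^ 2 + δ ^ 2) (2 * s) s := by
    simpa using (hasDerivAt_pow 2 s).add_const (δ ^ 2)
  simpa [mul_div_mul_left] using hsq.sqrt (by positivity)

lemma contDiff_smoothPosPart (hδ : 0 < δ) : ContDiff ℝ ∞ (smoothPosPart δ) := by
  have hsqrt : ContDiff ℝ ∞ fun s : ℝ ↦ √(s ^ 2 + δ ^ 2) :=
    ContDiff.sqrt (by fun_prop) fun s ↦ by positivity
  exact ((hsqrt.sub contDiff_const).add contDiff_id).div_const 2

lemma deriv_smoothPosPart (hδ : 0 < δ) :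
    deriv (smoothPosPart δ) = fun s ↦ (s / √(s ^ 2 + δ ^ 2) + 1) / 2 :=
  funext fun s ↦ ((((hasDerivAt_sqrt_sq_add_sq hδ s).sub_const δ).add
    (hasDerivAt_id s)).div_const 2).deriv

lemma deriv_smoothPosPart_mem_Icc (hδ : 0 < δ) (s : ℝ) :
    deriv (smoothPosPart δ) s ∈ Icc (0 : ℝ) 1 := by
  have hr : 0 < √(s ^ 2 + δ ^ 2) := by positivity
  have hs : |s / √(s ^ 2 + δ ^ 2)| ≤ 1 := by
    rw [abs_div, abs_of_pos hr, div_le_one hr]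
    exact Real.abs_le_sqrt (by nlinarith)
  rw [deriv_smoothPosPart hδ]
  constructor <;> linarith [abs_le.1 hs]

lemma deriv_deriv_smoothPosPart_nonneg (hδ : 0 < δ) (s : ℝ) :
    0 ≤ deriv (deriv (smoothPosPart δ)) s := by
  have hr : 0 < √(s ^ 2 + δ ^ 2) := by positivity
  have hsq : √(s ^ 2 + δ ^ 2) ^ 2 = s ^ 2 + δ ^ 2 := Real.sq_sqrt (by positivity)
  have hd := ((((hasDerivAt_id s).div (hasDerivAt_sqrt_sq_add_sq hδ s)
    hr.ne').add_const 1).div_const 2).deriv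
  rw [deriv_smoothPosPart hδ]
  refine le_of_le_of_eq ?_ hd.symm
  have hnum : s * (s / √(s ^ 2 + δ ^ 2)) ≤ √(s ^ 2 + δ ^ 2) := by
    rw [← mul_div_assoc, div_le_iff₀ hr]
    nlinarith
  simp only [id_eq, one_mul]
  exact div_nonneg (div_nonneg (by linarith) (sq_nonneg _)) zero_le_two

lemma mul_deriv_smoothPosPart_sub_mem_Icc (hδ : 0 < δ) (s : ℝ) :
    s * deriv (smoothPosPart δ) s - smoothPosPart δ s ∈ Icc 0 (δ / 2) := by
  have hr : 0 < √(s ^ 2 + δ ^ 2) := by positivity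
  have hsq : √(s ^ 2 + δ ^ 2) ^ 2 = s ^ 2 + δ ^ 2 := Real.sq_sqrt (by positivity)
  have hδr : δ ≤ √(s ^ 2 + δ ^ 2) := Real.le_sqrt_of_sq_le (by nlinarith)
  have heq : s * deriv (smoothPosPart δ) s - smoothPosPart δ s
      = (δ - δ * (δ / √(s ^ 2 + δ ^ 2))) / 2 := by
    rw [deriv_smoothPosPart hδ, smoothPosPart]
    field_simp
    linear_combination -hsq
  have hle : δ / √(s ^ 2 + δ ^ 2) ≤ 1 := (div_le_one hr).2 hδr
  rw [heq]
  constructor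
  · nlinarith
  · linarith [show 0 ≤ δ * (δ / √(s ^ 2 + δ ^ 2)) by positivity]

/-- The approximation of the positive part of a test function by test functions. -/
def testPosPart (hδ : 0 < δ) (ψ : 𝓓(Ω, ℝ)) : 𝓓(Ω, ℝ) :=
  ⟨fun x ↦ smoothPosPart δ (ψ x), (contDiff_smoothPosPart hδ).comp ψ.contDiff,
    ψ.hasCompactSupport.comp_left (smoothPosPart_zero hδ),
    (tsupport_comp_subset (smoothPosPart_zero hδ) ψ).trans ψ.tsupport_subset⟩

lemma coe_testPosPart (hδ : 0 < δ) (ψ : 𝓓(Ω, ℝ)) :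
    ⇑(testPosPart hδ ψ) = fun x ↦ smoothPosPart δ (ψ x) := rfl

lemma adjAdvDiff_testPosPart_le (hδ : 0 < δ) (ψ : 𝓓(Ω, ℝ)) (x : 𝔼 n) :
    adjAdvDiff u (testPosPart hδ ψ) x ≤ max (adjAdvDiff u ψ x) 0 + δ / 2 * |dvg u x| := by
  obtain ⟨hd0, hd1⟩ := deriv_smoothPosPart_mem_Icc hδ (ψ x)
  obtain ⟨he0, he1⟩ := mul_deriv_smoothPosPart_sub_mem_Icc hδ (ψ x)
  rw [coe_testPosPart, adjAdvDiff_comp ((contDiff_smoothPosPart hδ).of_le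
    (WithTop.coe_le_coe.2 le_top)) (contDiff_two_test ψ).contDiffAt]
  have hmain : deriv (smoothPosPart δ) (ψ x) * adjAdvDiff u ψ x ≤ max (adjAdvDiff u ψ x) 0 :=
    (mul_le_mul_of_nonneg_left (le_max_left _ 0) hd0).trans
      (mul_le_of_le_one_left (le_max_right _ _) hd1)
  have hconvex : 0 ≤ deriv (deriv (smoothPosPart δ)) (ψ x) * ∑ i, partialDeriv i ψ x ^ 2 :=
    mul_nonneg (deriv_deriv_smoothPosPart_nonneg hδ _) (Finset.sum_nonneg fun _ _ ↦ sq_nonneg _)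
  have herror : dvg u x * (ψ x * deriv (smoothPosPart δ) (ψ x) - smoothPosPart δ (ψ x)) ≤
      δ / 2 * |dvg u x| := by
    rw [mul_comm]
    exact (mul_le_mul_of_nonneg_left (le_abs_self _) he0).trans
      (mul_le_mul_of_nonneg_right he1 (abs_nonneg _))
  linarith

lemma integrableOn_tsupport_test {f : 𝔼 n → ℝ} (hf : ContinuousOn f Ω) (ψ : 𝓓(Ω, ℝ)) :
    IntegrableOn f (tsupport ψ) :=
  (hf.mono ψ.tsupport_subset).integrableOn_compact ψ.hasCompactSupport

lemma integral_max_zero_le_integral_testPosPart (hδ : 0 < δ) (ψ : 𝓓(Ω, ℝ)) :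
    ∫ x, max (ψ x) 0 ≤ (∫ x, testPosPart hδ ψ x) + δ * (volume.real (tsupport ψ) / 2) := by
  have hψ {x : 𝔼 n} (hx : x ∉ tsupport ψ) : ψ x = 0 := image_eq_zero_of_notMem_tsupport hx
  have hmaxc : ContinuousOn (fun x ↦ max (ψ x) 0) Ω :=
    (ψ.continuous.max continuous_const).continuousOn
  have hposc : ContinuousOn (fun x ↦ testPosPart hδ ψ x + δ / 2) Ω :=
    ((testPosPart hδ ψ).continuous.add continuous_const).continuousOn
  calc ∫ x, max (ψ x) 0 = ∫ x in tsupport ψ, max (ψ x) 0 :=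
        (setIntegral_eq_integral_of_forall_compl_eq_zero fun x hx ↦ by rw [hψ hx, max_self]).symm
    _ ≤ ∫ x in tsupport ψ, (testPosPart hδ ψ x + δ / 2) :=
        integral_mono (integrableOn_tsupport_test hmaxc ψ) (integrableOn_tsupport_test hposc ψ)
          fun x ↦ sub_le_iff_le_add.1 (max_zero_sub_le_smoothPosPart δ (ψ x))
    _ = (∫ x in tsupport ψ, testPosPart hδ ψ x) + δ * (volume.real (tsupport ψ) / 2) := by
        rw [integral_add (integrableOn_tsupport_test (testPosPart hδ ψ).continuous.continuousOn ψ)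
          (integrableOn_tsupport_test continuousOn_const ψ), setIntegral_const, smul_eq_mul]
        ring
    _ = _ := by
        rw [setIntegral_eq_integral_of_forall_compl_eq_zero fun x hx ↦ by
          simp only [coe_testPosPart, hψ hx, smoothPosPart_zero hδ]]

lemma integral_testPosPart_le (hu : ContDiffOn ℝ 1 u Ω) (hτ : ContDiffOn ℝ 2 τ Ω)
    (hτ1 : ∀ x ∈ Ω, advDiff u τ x = 1) (hτ0 : ∀ x ∈ Ω, 0 ≤ τ x) (hδ : 0 < δ) (ψ : 𝓓(Ω, ℝ)) :
    ∫ x, testPosPart hδ ψ x ≤ (∫ x, τ x * max (adjAdvDiff u ψ x) 0)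
      + δ * ((∫ x in tsupport ψ, τ x * |dvg u x|) / 2) := by
  set ψδ := testPosPart hδ ψ
  have hψδ {x : 𝔼 n} (hx : x ∉ tsupport ψ) : x ∉ tsupport ψδ :=
    fun h ↦ hx (tsupport_comp_subset (smoothPosPart_zero hδ) ψ h)
  have hadj : IntegrableOn (fun x ↦ τ x * adjAdvDiff u ψδ x) (tsupport ψ) :=
    integrableOn_tsupport_test (hτ.continuousOn.mul (continuous_adjAdvDiff hu ψδ).continuousOn) ψ
  have hmax : IntegrableOn (fun x ↦ τ x * max (adjAdvDiff u ψ x) 0) (tsupport ψ) :=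
    integrableOn_tsupport_test (hτ.continuousOn.mul
      ((continuous_adjAdvDiff hu ψ).continuousOn.sup continuousOn_const)) ψ
  have herr : IntegrableOn (fun x ↦ τ x * |dvg u x|) (tsupport ψ) :=
    integrableOn_tsupport_test (hτ.continuousOn.mul (continuousOn_dvg Ω.isOpen hu).abs) ψ
  calc ∫ x, ψδ x = ∫ x, advDiff u τ x * ψδ x := by
        congr! 2 with x
        by_cases hx : x ∈ Ω
        · rw [hτ1 x hx, one_mul]
        · rw [image_eq_zero_of_notMem_tsupport (hψδ fun h ↦ hx (ψ.tsupport_subset h)), mul_zero]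
    _ = ∫ x, τ x * adjAdvDiff u ψδ x := (integral_mul_adjAdvDiff hu hτ ψδ).symm
    _ = ∫ x in tsupport ψ, τ x * adjAdvDiff u ψδ x :=
        (setIntegral_eq_integral_of_forall_compl_eq_zero fun x hx ↦ by
          rw [adjAdvDiff_eq_zero_of_notMem_tsupport (hψδ hx), mul_zero]).symm
    _ ≤ ∫ x in tsupport ψ, (τ x * max (adjAdvDiff u ψ x) 0 + δ / 2 * (τ x * |dvg u x|)) := by
        refine setIntegral_mono_on hadj (hmax.add (herr.const_mul _))
          (isClosed_tsupport ψ).measurableSet fun x hx ↦ ?_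
        have hle := mul_le_mul_of_nonneg_left (adjAdvDiff_testPosPart_le (u := u) hδ ψ x)
          (hτ0 x (ψ.tsupport_subset hx))
        linarith
    _ = (∫ x in tsupport ψ, τ x * max (adjAdvDiff u ψ x) 0)
          + δ * ((∫ x in tsupport ψ, τ x * |dvg u x|) / 2) := by
        rw [integral_add hmax (herr.const_mul _), integral_const_mul]
        ring
    _ = _ := by
        rw [setIntegral_eq_integral_of_forall_compl_eq_zero fun x hx ↦ by
          rw [adjAdvDiff_eq_zero_of_notMem_tsupport hx, max_self, mul_zero]]

/-- Kato's inequality for the adjoint operator, integrated against the exit time. -/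
lemma integral_max_zero_le (hu : ContDiffOn ℝ 1 u Ω) (hτ : ContDiffOn ℝ 2 τ Ω)
    (hτ1 : ∀ x ∈ Ω, advDiff u τ x = 1) (hτ0 : ∀ x ∈ Ω, 0 ≤ τ x) (ψ : 𝓓(Ω, ℝ)) :
    ∫ x, max (ψ x) 0 ≤ ∫ x, τ x * max (adjAdvDiff u ψ x) 0 := by
  refine le_of_forall_pos_le_add_mul (c := (∫ x in tsupport ψ, τ x * |dvg u x|) / 2
    + volume.real (tsupport ψ) / 2) fun δ hδ ↦ ?_
  linarith [integral_max_zero_le_integral_testPosPart hδ ψ,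
    integral_testPosPart_le hu hτ hτ1 hτ0 hδ ψ]

end Kato

section HahnBanach

lemma exists_linearMap_comp_eq_of_le_sublinear {V E : Type*} [AddCommGroup V] [Module ℝ V]
    [AddCommGroup E] [Module ℝ E] {p : E → ℝ} (hsmul : ∀ c : ℝ, 0 < c → ∀ x, p (c • x) = c * p x)
    (hadd : ∀ x y, p (x + y) ≤ p x + p y) {T : V →ₗ[ℝ] E} {ℓ : V →ₗ[ℝ] ℝ}
    (h : ∀ v, ℓ v ≤ p (T v)) : ∃ Λ : E →ₗ[ℝ] ℝ, (∀ v, Λ (T v) = ℓ v) ∧ ∀ x, Λ x ≤ p x := by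
  have hp0 : p 0 = 0 := by linarith [hsmul 2 two_pos 0, congrArg p (smul_zero (2 : ℝ) (A := E))]
  have hker (v : V) (hv : T v = 0) : ℓ v ≤ 0 := (h v).trans_eq (by rw [hv, hp0])
  have hℓ : ℓ ∈ LinearMap.range T.dualMap := by
    rw [LinearMap.range_dualMap_eq_dualAnnihilator_ker, Submodule.mem_dualAnnihilator]
    refine fun v hv ↦ le_antisymm (hker v hv) ?_
    simpa using hker (-v) (by rw [map_neg, hv, neg_zero])
  obtain ⟨ℓ', rfl⟩ := hℓ
  obtain ⟨Λ, hΛT, hΛp⟩ := exists_extension_of_le_sublinear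
    ⟨LinearMap.range T, ℓ'.domRestrict (LinearMap.range T)⟩ p hsmul hadd
    (by rintro ⟨_, v, rfl⟩; exact h v)
  exact ⟨Λ, fun v ↦ hΛT ⟨T v, v, rfl⟩, hΛp⟩

variable {α : Type*} {m : MeasurableSpace α} {μ : Measure α}

lemma inner_nonneg_of_nonneg {F G : Lp ℝ 2 μ} (hF : 0 ≤ F) (hG : 0 ≤ G) : 0 ≤ ⟪F, G⟫_ℝ := by
  rw [L2.inner_def]
  refine integral_nonneg_of_ae ?_
  filter_upwards [(Lp.coeFn_nonneg F).2 hF, (Lp.coeFn_nonneg G).2 hG] with x hFx hGx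
  exact mul_nonneg hGx hFx

lemma coeFn_posPart_ae (F : Lp ℝ 2 μ) : ⇑(F⁺) =ᵐ[μ] fun x ↦ max (F x) 0 := by
  filter_upwards [Lp.coeFn_sup F 0, Lp.coeFn_zero ℝ 2 μ] with x hx h0
  simp only [posPart_def, hx, Pi.sup_apply, h0, Pi.zero_apply]

lemma inner_posPart_self (F : Lp ℝ 2 μ) : ⟪F, F⁺⟫_ℝ = ‖F⁺‖ ^ 2 := by
  rw [← real_inner_self_eq_norm_sq, L2.inner_def, L2.inner_def]
  refine integral_congr_ae ?_
  filter_upwards [coeFn_posPart_ae F] with x hx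
  rw [hx]
  rcases le_total (F x) 0 with h | h <;> simp [h]

lemma nonpos_of_inner_posPart_nonpos {F : Lp ℝ 2 μ} (h : ⟪F, F⁺⟫_ℝ ≤ 0) : F ≤ 0 := by
  rw [inner_posPart_self] at h
  exact posPart_eq_zero.1 (norm_eq_zero.1 (pow_eq_zero_iff two_ne_zero |>.1
    (le_antisymm h (sq_nonneg _))))

lemma smul_posPart_of_pos {c : ℝ} (hc : 0 < c) (F : Lp ℝ 2 μ) : (c • F)⁺ = c • F⁺ := by
  refine Lp.ext ?_
  filter_upwards [coeFn_posPart_ae (c • F), coeFn_posPart_ae F, Lp.coeFn_smul c F,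
    Lp.coeFn_smul c F⁺] with x h₁ h₂ h₃ h₄
  simp only [h₁, h₂, h₃, h₄, Pi.smul_apply, smul_eq_mul, mul_max_of_nonneg _ _ hc.le, mul_zero]

lemma posPart_add_le_add (F G : Lp ℝ 2 μ) : (F + G)⁺ ≤ F⁺ + G⁺ :=
  sup_le (add_le_add le_sup_left le_sup_left) (add_nonneg le_sup_right le_sup_right)

lemma exists_inner_eq_of_le_inner_posPart {S : Lp ℝ 2 μ} (hS : 0 ≤ S) {V : Type*} [AddCommGroup V]
    [Module ℝ V] {T : V →ₗ[ℝ] Lp ℝ 2 μ} {ℓ : V →ₗ[ℝ] ℝ} (h : ∀ v, ℓ v ≤ ⟪S, (T v)⁺⟫_ℝ) :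
    ∃ Φ : Lp ℝ 2 μ, 0 ≤ Φ ∧ Φ ≤ S ∧ ∀ v, ⟪Φ, T v⟫_ℝ = ℓ v := by
  obtain ⟨Λ, hΛT, hΛS⟩ := exists_linearMap_comp_eq_of_le_sublinear (p := fun F ↦ ⟪S, F⁺⟫_ℝ)
    (fun c hc F ↦ by rw [smul_posPart_of_pos hc, real_inner_smul_right])
    (fun F G ↦ by
      rw [← inner_add_right, ← sub_nonneg, ← inner_sub_right]
      exact inner_nonneg_of_nonneg hS (sub_nonneg.2 (posPart_add_le_add F G))) h
  have hΛ_le (F : Lp ℝ 2 μ) : Λ F ≤ ‖S‖ * ‖F‖ :=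
    calc Λ F ≤ ⟪S, F⁺⟫_ℝ := hΛS F
      _ ≤ ‖S‖ * ‖F⁺‖ := real_inner_le_norm _ _
      _ ≤ ‖S‖ * ‖F‖ := by
        gcongr
        simpa [posPart_def] using norm_sup_sub_sup_le_norm F 0 0
  obtain ⟨Φ, hΦ⟩ := (InnerProductSpace.toDual ℝ (Lp ℝ 2 μ)).surjective
    (Λ.mkContinuous ‖S‖ fun F ↦ abs_le'.2 ⟨hΛ_le F, by simpa using hΛ_le (-F)⟩)
  have hΦΛ (F : Lp ℝ 2 μ) : ⟪Φ, F⟫_ℝ = Λ F := DFunLike.congr_fun hΦ F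
  refine ⟨Φ, ?_, ?_, fun v ↦ (hΦΛ _).trans (hΛT v)⟩
  · refine neg_nonpos.1 (nonpos_of_inner_posPart_nonpos ?_)
    simpa [← hΦΛ, posPart_of_nonpos (neg_nonpos.2 (posPart_nonneg (-Φ)))] using hΛS (-((-Φ)⁺))
  · refine sub_nonpos.1 (nonpos_of_inner_posPart_nonpos ?_)
    simpa [← hΦΛ, posPart_of_nonneg (posPart_nonneg (Φ - S)), inner_sub_left] using hΛS (Φ - S)⁺

end HahnBanach

section WeakSolutions

/-- `φ` solves `-Δφ + ⟨u, ∇φ⟩ = h` in `Ω` in the sense of distributions. -/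
def IsWeakSol (Ω : Opens (𝔼 n)) (u : 𝔼 n → 𝔼 n) (h φ : 𝔼 n → ℝ) : Prop :=
  ∀ ψ : 𝓓(Ω, ℝ), ∫ x, φ x * adjAdvDiff u ψ x = ∫ x, h x * ψ x

variable {Ω : Opens (𝔼 n)} {u : 𝔼 n → 𝔼 n} {h τ : 𝔼 n → ℝ} {M : ℝ}

lemma memLp_adjAdvDiff (hu : ContDiffOn ℝ 1 u Ω) (ψ : 𝓓(Ω, ℝ)) :
    MemLp (adjAdvDiff u ψ) 2 (volume.restrict Ω) :=
  ((continuous_adjAdvDiff hu ψ).memLp_of_hasCompactSupport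
    (hasCompactSupport_adjAdvDiff u ψ)).restrict Ω

/-- The adjoint operator on test functions, with values in `L²(Ω)`. -/
def adjAdvDiffL2 (hu : ContDiffOn ℝ 1 u Ω) :
    𝓓(Ω, ℝ) →ₗ[ℝ] Lp ℝ 2 (volume.restrict (Ω : Set (𝔼 n))) where
  toFun ψ := (memLp_adjAdvDiff hu ψ).toLp
  map_add' ψ χ := by
    rw [← MemLp.toLp_add]
    exact MemLp.toLp_congr _ _ (ae_of_all _ fun x ↦ adjAdvDiff_add
      (contDiff_two_test ψ).contDiffAt (contDiff_two_test χ).contDiffAt)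
  map_smul' c ψ := by
    rw [RingHom.id_apply, ← MemLp.toLp_const_smul]
    exact MemLp.toLp_congr _ _ (ae_of_all _ fun x ↦ adjAdvDiff_const_smul c
      (contDiff_two_test ψ).contDiffAt)

/-- Integration of test functions against a continuous function. -/
def testPairing (hh : ContinuousOn h Ω) : 𝓓(Ω, ℝ) →ₗ[ℝ] ℝ where
  toFun ψ := ∫ x, h x * ψ x
  map_add' ψ χ := by
    rw [← integral_add (integrable_mul_test hh ψ) (integrable_mul_test hh χ)]
    simp only [add_apply, mul_add]
  map_smul' c ψ := by
    simp only [smul_apply, smul_eq_mul, mul_left_comm, integral_const_mul, RingHom.id_apply]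

lemma integral_mul_le_mul_integral_max_zero (hh : ContinuousOn h Ω)
    (hhM : ∀ x ∈ Ω, h x ∈ Icc 0 M) (ψ : 𝓓(Ω, ℝ)) :
    ∫ x, h x * ψ x ≤ M * ∫ x, max (ψ x) 0 := by
  have hpos : Integrable fun x ↦ max (ψ x) 0 :=
    (ψ.continuous.max continuous_const).integrable_of_hasCompactSupport
      (ψ.hasCompactSupport.comp_left (g := (max · 0)) (max_self 0))
  rw [← integral_const_mul]
  refine integral_mono (integrable_mul_test hh ψ) (hpos.const_mul M) fun x ↦ ?_
  by_cases hx : x ∈ Ω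
  · exact (mul_le_mul_of_nonneg_left (le_max_left _ 0) (hhM x hx).1).trans
      (mul_le_mul_of_nonneg_right (hhM x hx).2 (le_max_right _ _))
  · simp [image_eq_zero_of_notMem_tsupport fun h ↦ hx (ψ.tsupport_subset h)]

lemma testPairing_le_inner (hu : ContDiffOn ℝ 1 u Ω) (hτ : ContDiffOn ℝ 2 τ Ω)
    (hτ1 : ∀ x ∈ Ω, advDiff u τ x = 1) (hτ0 : ∀ x ∈ Ω, 0 ≤ τ x) (hM : 0 ≤ M)
    (hh : ContinuousOn h Ω) (hhM : ∀ x ∈ Ω, h x ∈ Icc 0 M)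
    (hτ2 : MemLp τ 2 (volume.restrict (Ω : Set (𝔼 n)))) (ψ : 𝓓(Ω, ℝ)) :
    testPairing hh ψ ≤ ⟪(hτ2.const_mul M).toLp, (adjAdvDiffL2 hu ψ)⁺⟫_ℝ := by
  have hinner : ⟪(hτ2.const_mul M).toLp, (adjAdvDiffL2 hu ψ)⁺⟫_ℝ
      = M * ∫ x in Ω, τ x * max (adjAdvDiff u ψ x) 0 := by
    rw [L2.inner_def, ← integral_const_mul]
    refine integral_congr_ae ?_
    filter_upwards [(hτ2.const_mul M).coeFn_toLp, coeFn_posPart_ae (adjAdvDiffL2 hu ψ),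
      (memLp_adjAdvDiff hu ψ).coeFn_toLp] with x h₁ h₂ h₃
    have h₃' : adjAdvDiffL2 hu ψ x = adjAdvDiff u ψ x := h₃
    rw [h₁, h₂, h₃']
    exact (mul_comm _ _).trans (mul_assoc _ _ _)
  rw [hinner, setIntegral_eq_integral_of_forall_compl_eq_zero fun x hx ↦ by
    rw [adjAdvDiff_eq_zero_of_notMem_tsupport fun h ↦ hx (ψ.tsupport_subset h), max_self, mul_zero]]
  exact (integral_mul_le_mul_integral_max_zero hh hhM ψ).trans
    (mul_le_mul_of_nonneg_left (integral_max_zero_le hu hτ hτ1 hτ0 ψ) hM)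

lemma measurable_indicator {X : Type*} [TopologicalSpace X] [MeasurableSpace X]
    [OpensMeasurableSpace X] {s : Set X} {f : X → ℝ} (hs : MeasurableSet s)
    (hf : ContinuousOn f s) : Measurable (s.indicator f) := by
  classical
  rw [← Set.piecewise_eq_indicator]
  exact hf.measurable_piecewise continuousOn_const hs

lemma memLp_of_continuousOn_closure (hΩ : Bornology.IsBounded (Ω : Set (𝔼 n)))
    (hτ : ContinuousOn τ (closure Ω)) {p : ENNReal} :
    MemLp τ p (volume.restrict (Ω : Set (𝔼 n))) := by
  have : IsFiniteMeasure (volume.restrict (Ω : Set (𝔼 n))) := ⟨by simpa using hΩ.measure_lt_top⟩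
  obtain ⟨θ, hθ⟩ := hΩ.isCompact_closure.exists_bound_of_continuousOn hτ
  exact MemLp.of_bound ((hτ.mono subset_closure).aestronglyMeasurable Ω.isOpen.measurableSet) θ
    ((ae_restrict_mem Ω.isOpen.measurableSet).mono fun x hx ↦ hθ x (subset_closure hx))

/-- `0 ≤ φ ≤ σ` in `Ω` and `φ = 0` off `Ω`. With `σ` a multiple of the exit time this replaces
boundary regularity: it makes `φ` vanish continuously on the boundary. -/
structure IsDominated (Ω : Opens (𝔼 n)) (σ φ : 𝔼 n → ℝ) : Prop where
  mem_Icc : ∀ x ∈ Ω, φ x ∈ Icc 0 (σ x)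
  eq_zero : ∀ x ∉ Ω, φ x = 0

lemma exists_isWeakSol (hΩ : Bornology.IsBounded (Ω : Set (𝔼 n))) (hu : ContDiffOn ℝ 1 u Ω)
    (hτ : IsDirichletSol Ω u 1 τ) (hM : 0 ≤ M) (hh : ContinuousOn h Ω)
    (hhM : ∀ x ∈ Ω, h x ∈ Icc 0 M) :
    ∃ φ, Measurable φ ∧ IsDominated Ω (M • τ) φ ∧ IsWeakSol Ω u h φ := by
  have hτ0 (x : 𝔼 n) (hx : x ∈ Ω) : 0 ≤ τ x := hτ.nonneg hΩ (subset_closure hx)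
  have hτc : ContinuousOn τ Ω := hτ.contDiffOn.continuousOn
  have hmem : ∀ᵐ x ∂volume.restrict (Ω : Set (𝔼 n)), x ∈ Ω :=
    ae_restrict_mem Ω.isOpen.measurableSet
  have hτ2 : MemLp τ 2 (volume.restrict (Ω : Set (𝔼 n))) :=
    memLp_of_continuousOn_closure hΩ hτ.continuousOn
  have hMτ : 0 ≤ (hτ2.const_mul M).toLp := by
    rw [← Lp.coeFn_nonneg]
    filter_upwards [(hτ2.const_mul M).coeFn_toLp, hmem] with x hx hxΩ
    exact (mul_nonneg hM (hτ0 x hxΩ)).trans_eq hx.symm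
  obtain ⟨Φ, hΦ0, hΦS, hΦ⟩ := exists_inner_eq_of_le_inner_posPart hMτ
    (testPairing_le_inner hu hτ.contDiffOn hτ.advDiff_eq hτ0 hM hh hhM hτ2)
  refine ⟨fun x ↦ max 0 (min (Φ x) ((Ω : Set (𝔼 n)).indicator (fun y ↦ M * τ y) x)),
    measurable_const.max ((Lp.stronglyMeasurable Φ).measurable.min
      (measurable_indicator Ω.isOpen.measurableSet (continuousOn_const.mul hτc))),
    ⟨fun x hx ↦ ?_, fun x hx ↦ ?_⟩, fun ψ ↦ ?_⟩
  · simp only [indicator_of_mem (show x ∈ (Ω : Set (𝔼 n)) from hx)]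
    exact ⟨le_max_left _ _, max_le (mul_nonneg hM (hτ0 x hx)) (min_le_right _ _)⟩
  · simp [indicator_of_notMem (show x ∉ (Ω : Set (𝔼 n)) from hx)]
  · refine Eq.trans ?_ (hΦ ψ)
    rw [L2.inner_def, ← setIntegral_eq_integral_of_forall_compl_eq_zero (s := Ω) fun x hx ↦ by
      simp [indicator_of_notMem hx]]
    refine integral_congr_ae ?_
    filter_upwards [hmem, (Lp.coeFn_nonneg Φ).2 hΦ0, (Lp.coeFn_le _ _).2 hΦS,
      (hτ2.const_mul M).coeFn_toLp, (memLp_adjAdvDiff hu ψ).coeFn_toLp] with x hx h₀ h₁ h₂ h₃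
    have h₀' : 0 ≤ Φ x := h₀
    have h₃' : adjAdvDiffL2 hu ψ x = adjAdvDiff u ψ x := h₃
    rw [indicator_of_mem hx, min_eq_left (h₁.trans_eq h₂), max_eq_right h₀', h₃']
    exact mul_comm _ _

end WeakSolutions

section ScalePotential

variable {f : 𝔼 n → ℝ} {x : 𝔼 n}

lemma partialDeriv_comm (hf : ContDiffAt ℝ 2 f x) (i j : Fin n) :
    partialDeriv i (partialDeriv j f) x = partialDeriv j (partialDeriv i f) x := by
  have hdf : DifferentiableAt ℝ (fderiv ℝ f) x :=
    (hf.fderiv_right (m := 1) (by norm_num)).differentiableAt one_ne_zero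
  have hsnd (i j : Fin n) : partialDeriv i (partialDeriv j f) x =
      fderiv ℝ (fderiv ℝ f) x (EuclideanSpace.single i 1) (EuclideanSpace.single j 1) := by
    rw [partialDeriv]
    unfold partialDeriv
    simp [fderiv_clm_apply hdf (differentiableAt_const _)]
  rw [hsnd, hsnd]
  exact hf.isSymmSndFDerivAt (by simp) _ _

lemma lapl_partialDeriv (hf : ContDiffAt ℝ 3 f x) (j : Fin n) :
    lapl (partialDeriv j f) x = partialDeriv j (lapl f) x := by
  have hf' (i : Fin n) : ContDiffAt ℝ 2 (partialDeriv i f) x :=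
    contDiffAt_partialDeriv i hf (by norm_num)
  have hf'' (i : Fin n) : DifferentiableAt ℝ (partialDeriv i (partialDeriv i f)) x :=
    (contDiffAt_partialDeriv (m := 1) i (hf' i) (by norm_num)).differentiableAt one_ne_zero
  have hcomm (i : Fin n) : partialDeriv i (partialDeriv j f) =ᶠ[𝓝 x]
      partialDeriv j (partialDeriv i f) := by
    filter_upwards [hf.eventually (by simp)] with y hy
    exact partialDeriv_comm (hy.of_le (by norm_num)) i j
  have hsum : partialDeriv j (lapl f) x =
      ∑ i, partialDeriv j (partialDeriv i (partialDeriv i f)) x := by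
    rw [lapl_eq_sum, partialDeriv, fderiv_fun_sum fun i _ ↦ hf'' i, sum_apply]
    rfl
  rw [hsum, lapl_eq_sum]
  exact Finset.sum_congr rfl fun i _ ↦
    (partialDeriv_congr i (hcomm i)).trans (partialDeriv_comm (hf' i) i j)

/-- `S` is a potential for the `k`-homogeneous rescalings of `P`: the rescaled kernel
`t⁻ᵏ P(v / t)` has `t`-derivative `t⁻⁽ᵏ⁺¹⁾ (ΔS)(v / t)`. -/
def IsScalePotential (k : ℕ) (P S : 𝔼 n → ℝ) : Prop :=
  ∀ z, lapl S z = -(k * P z + fderiv ℝ P z z)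

variable {P S : 𝔼 n → ℝ} {k : ℕ}

lemma isScalePotential_partialDeriv (h : IsScalePotential k P S) (hP : ContDiff ℝ 2 P)
    (hS : ContDiff ℝ 3 S) (j : Fin n) :
    IsScalePotential (k + 1) (partialDeriv j P) (partialDeriv j S) := by
  intro z
  have hPz : DifferentiableAt ℝ P z := hP.contDiffAt.differentiableAt two_ne_zero
  have hdP : DifferentiableAt ℝ (fderiv ℝ P) z :=
    (hP.contDiffAt.fderiv_right (m := 1) (by norm_num)).differentiableAt one_ne_zero
  have hsymm := hP.contDiffAt.isSymmSndFDerivAt (x := z) (by simp)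
  rw [lapl_partialDeriv hS.contDiffAt, funext h]
  unfold partialDeriv
  have hradial : DifferentiableAt ℝ (fun y ↦ fderiv ℝ P y y) z := hdP.clm_apply differentiableAt_id
  rw [fderiv_fun_neg, fderiv_fun_add (hPz.const_mul _) hradial, fderiv_const_mul hPz,
    fderiv_clm_apply hdP differentiableAt_fun_id, fderiv_clm_apply hdP (differentiableAt_const _)]
  simp [hsymm (EuclideanSpace.single j 1) z]
  ring

lemma IsScalePotential.const_smul (h : IsScalePotential k P S) (hP : Differentiable ℝ P)
    (hS : ContDiff ℝ 2 S) (c : ℝ) : IsScalePotential k (c • P) (c • S) := by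
  intro z
  rw [lapl_const_smul c hS.contDiffAt, h z, fderiv_const_smul (hP z)]
  simp
  ring

lemma isScalePotential_radial {e e' : ℝ → ℝ} (he : ∀ s, HasDerivAt e (e' s) s)
    (he' : Differentiable ℝ e') :
    IsScalePotential n (fun z : 𝔼 n ↦ 2 * e' (1 - ‖z‖ ^ 2)) fun z ↦ e (1 - ‖z‖ ^ 2) := by
  have hq : Differentiable ℝ fun z : 𝔼 n ↦ 1 - ‖z‖ ^ 2 :=
    (differentiable_const 1).sub (differentiable_id.norm_sq ℝ)
  have hdq (i : Fin n) (z : 𝔼 n) : partialDeriv i (fun z : 𝔼 n ↦ 1 - ‖z‖ ^ 2) z = -2 * z i := by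
    have h : HasFDerivAt (fun z : 𝔼 n ↦ 1 - ‖z‖ ^ 2) _ z :=
      (hasStrictFDerivAt_norm_sq z).hasFDerivAt.const_sub 1
    simp [partialDeriv, h.fderiv, EuclideanSpace.inner_single_right]
  have hcoord (i : Fin n) (z : 𝔼 n) : partialDeriv i (fun z ↦ -z i) z = -1 := by
    have h : HasFDerivAt (fun z : 𝔼 n ↦ -z i) _ z :=
      (EuclideanSpace.proj i : 𝔼 n →L[ℝ] ℝ).hasFDerivAt.neg
    simp [partialDeriv, h.fderiv]
  set η : 𝔼 n → ℝ := fun z ↦ 2 * e' (1 - ‖z‖ ^ 2)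
  have hηd : Differentiable ℝ η := (he'.comp hq).const_mul 2
  have hgrad (i : Fin n) : partialDeriv i (fun z : 𝔼 n ↦ e (1 - ‖z‖ ^ 2)) = fun z ↦ -z i * η z := by
    funext z
    rw [partialDeriv_comp i (he _).differentiableAt (hq z), (he _).deriv, hdq]
    ring
  intro z
  have hcoord_diff (i : Fin n) : DifferentiableAt ℝ (fun z : 𝔼 n ↦ -z i) z :=
    (EuclideanSpace.proj i : 𝔼 n →L[ℝ] ℝ).differentiableAt.neg
  have hsecond (i : Fin n) : partialDeriv i (fun z ↦ -z i * η z) z =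
      -η z - z i * partialDeriv i η z := by
    rw [partialDeriv_mul i (hcoord_diff i) (hηd z), hcoord]
    ring
  simp only [lapl_eq_sum, hgrad, hsecond, fderiv_apply_eq_sum_partialDeriv,
    Finset.sum_sub_distrib, Finset.sum_const, Finset.card_univ, Fintype.card_fin, nsmul_eq_mul]
  ring

lemma exists_test_eq_radial {e : ℝ → ℝ} (he : ContDiff ℝ ∞ e) (h0 : ∀ s ≤ 0, e s = 0) :
    ∃ ψ : 𝓓((⊤ : Opens (𝔼 n)), ℝ), ⇑ψ = fun z ↦ e (1 - ‖z‖ ^ 2) := by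
  refine ⟨⟨_, he.comp (contDiff_const.sub (contDiff_norm_sq ℝ)),
    .intro (isCompact_closedBall 0 1) fun z hz ↦ h0 _ ?_, by simp⟩, rfl⟩
  have : 1 < ‖z‖ := by simpa using hz
  nlinarith

lemma exists_isScalePotential_integral_eq_one (n : ℕ) :
    ∃ η K : 𝓓((⊤ : Opens (𝔼 n)), ℝ), IsScalePotential n η K ∧ ∫ z, η z = 1 := by
  set e' : ℝ → ℝ := fun s ↦ s⁻¹ ^ 2 * expNegInvGlue s
  have he (s : ℝ) : HasDerivAt expNegInvGlue (e' s) s := by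
    simpa [e'] using expNegInvGlue.hasDerivAt_polynomial_eval_inv_mul 1 s
  have he' : ContDiff ℝ ∞ e' := by
    have := expNegInvGlue.contDiff_polynomial_eval_inv_mul (n := ⊤) (Polynomial.X ^ 2)
    simpa only [Polynomial.eval_pow, Polynomial.eval_X] using this
  obtain ⟨K, hK⟩ := exists_test_eq_radial (n := n) expNegInvGlue.contDiff
    fun s ↦ expNegInvGlue.zero_of_nonpos
  obtain ⟨η, hη⟩ := exists_test_eq_radial (n := n)
    (contDiff_const.mul he' : ContDiff ℝ ∞ (2 * e' ·)) fun s hs ↦ by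
      simp [e', expNegInvGlue.zero_of_nonpos hs]
  have hpot : IsScalePotential n η K := by
    rw [hη, hK]
    exact isScalePotential_radial he (he'.differentiable (by simp))
  have hpos : 0 < ∫ z, η z := by
    refine η.continuous.integral_pos_of_hasCompactSupport_nonneg_nonzero η.hasCompactSupport
      (fun z ↦ ?_) (x := 0) ?_
    · have := expNegInvGlue.nonneg (1 - ‖z‖ ^ 2)
      simp only [hη, e', Pi.zero_apply]
      positivity
    · simp [hη, e', (expNegInvGlue.pos_of_pos one_pos).ne']
  refine ⟨(∫ z, η z)⁻¹ • η, (∫ z, η z)⁻¹ • K,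
    hpot.const_smul (differentiable_test η) (contDiff_two_test K) _, ?_⟩
  calc ∫ z, (∫ y, η y)⁻¹ * η z = (∫ y, η y)⁻¹ * ∫ z, η z := integral_const_mul _ _
    _ = 1 := inv_mul_cancel₀ hpos.ne'

end ScalePotential

section ScaledAverages

variable {k m : ℕ} {t : ℝ} {f : 𝔼 n → ℝ} {x : 𝔼 n}

/-- Smooth compactly supported kernels on `ℝⁿ`, realised as test functions on the whole space. -/
abbrev Kernel (n : ℕ) := 𝓓((⊤ : Opens (𝔼 n)), ℝ)

/-- The `k`-homogeneous rescaling `t⁻ᵏ P(v / t)` of a kernel; `k = n` preserves its integral. -/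
def rescale (k : ℕ) (t : ℝ) (P : 𝔼 n → ℝ) (v : 𝔼 n) : ℝ :=
  (t ^ k)⁻¹ * P (t⁻¹ • v)

/-- The average of `f` around `x` at scale `t` against the kernel `P`. -/
def scaledAverage (k : ℕ) (P f : 𝔼 n → ℝ) (t : ℝ) (x : 𝔼 n) : ℝ :=
  ∫ y, f y * rescale k t P (x - y)

lemma contDiff_rescale (k : ℕ) (t : ℝ) (P : Kernel n) : ContDiff ℝ ∞ (rescale k t P) :=
  contDiff_const.mul (P.contDiff.comp (contDiff_const_smul t⁻¹))

lemma hasCompactSupport_rescale (k : ℕ) (ht : t ≠ 0) (P : Kernel n) :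
    HasCompactSupport (rescale k t P) :=
  (P.hasCompactSupport.comp_smul (inv_ne_zero ht)).mul_left

lemma integrable_rescale_sub (k : ℕ) (ht : t ≠ 0) (P : Kernel n) (x : 𝔼 n) :
    Integrable fun y ↦ rescale k t P (x - y) :=
  ((contDiff_rescale k t P).continuous.integrable_of_hasCompactSupport
    (hasCompactSupport_rescale k ht P)).comp_sub_left x

lemma integrable_mul_rescale (hf : Integrable f) (k : ℕ) (t : ℝ) (P : Kernel n) (x : 𝔼 n) :
    Integrable fun y ↦ f y * rescale k t P (x - y) := by
  obtain ⟨C, hC⟩ := P.hasCompactSupport.exists_bound_of_continuous P.continuous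
  refine hf.mul_bdd (c := ‖(t ^ k)⁻¹‖ * C) ?_ (ae_of_all _ fun y ↦ ?_)
  · exact ((contDiff_rescale k t P).continuous.comp (by fun_prop)).aestronglyMeasurable
  · rw [rescale, norm_mul]
    exact mul_le_mul_of_nonneg_left (hC _) (norm_nonneg _)

lemma integral_rescale_sub (m : ℕ) (ht : 0 < t) (P : 𝔼 n → ℝ) (x : 𝔼 n) :
    ∫ y, rescale (n + m) t P (x - y) = (t ^ m)⁻¹ * ∫ z, P z := by
  simp only [rescale]
  rw [integral_const_mul, integral_sub_left_eq_self (fun y ↦ P (t⁻¹ • y)) volume x,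
    Measure.integral_comp_inv_smul_of_nonneg volume P ht.le, finrank_euclideanSpace_fin,
    smul_eq_mul, pow_add]
  field_simp

lemma abs_scaledAverage_le {M : ℝ} (m : ℕ) (ht : 0 < t) (P : Kernel n)
    (hf : ∀ y, t⁻¹ • (x - y) ∈ tsupport P → |f y| ≤ M) :
    |scaledAverage (n + m) P f t x| ≤ M * ((t ^ m)⁻¹ * ∫ z, |P z|) := by
  have habs (v : 𝔼 n) : |rescale (n + m) t P v| = rescale (n + m) t (fun z ↦ |P z|) v := by
    rw [rescale, rescale, abs_mul, abs_of_pos (by positivity)]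
  rw [← integral_rescale_sub m ht (fun z ↦ |P z|) x, ← integral_const_mul]
  simp only [← habs]
  rw [scaledAverage, ← Real.norm_eq_abs]
  refine norm_integral_le_of_norm_le ((integrable_rescale_sub _ ht.ne' P x).abs.const_mul M)
    (ae_of_all _ fun y ↦ ?_)
  rw [norm_mul, Real.norm_eq_abs, Real.norm_eq_abs]
  by_cases hy : t⁻¹ • (x - y) ∈ tsupport P
  · exact mul_le_mul_of_nonneg_right (hf y hy) (abs_nonneg _)
  · simp [rescale, image_eq_zero_of_notMem_tsupport hy]

lemma abs_scaledAverage_le_of_integral_eq_zero {M c : ℝ} (m : ℕ) (ht : 0 < t) (P : Kernel n)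
    (hP : ∫ z, P z = 0) (hM : 0 ≤ M) (hf : ∀ y, t⁻¹ • (x - y) ∈ tsupport P → |f y - c| ≤ M) :
    |scaledAverage (n + m) P f t x| ≤ M * ((t ^ m)⁻¹ * ∫ z, |P z|) := by
  by_cases hint : Integrable fun y ↦ f y * rescale (n + m) t P (x - y)
  · have hsub : scaledAverage (n + m) P (fun y ↦ f y - c) t x = scaledAverage (n + m) P f t x := by
      simp only [scaledAverage, sub_mul]
      rw [integral_sub hint ((integrable_rescale_sub _ ht.ne' P x).const_mul c),
        integral_const_mul, integral_rescale_sub m ht, hP]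
      ring
    exact hsub ▸ abs_scaledAverage_le m ht P hf
  · rw [scaledAverage, integral_undef hint, abs_zero]
    have : 0 ≤ ∫ z, |P z| := integral_nonneg fun _ ↦ abs_nonneg _
    positivity

lemma hasDerivAt_rescale {P S : 𝔼 n → ℝ} (hP : Differentiable ℝ P) (h : IsScalePotential k P S)
    (ht : t ≠ 0) (v : 𝔼 n) :
    HasDerivAt (fun t ↦ rescale k t P v) (rescale (k + 1) t (lapl S) v) t := by
  have hpow : HasDerivAt (fun t : ℝ ↦ (t ^ k)⁻¹) (-(k * t ^ (k - 1)) / (t ^ k) ^ 2) t :=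
    (hasDerivAt_pow k t).fun_inv (pow_ne_zero k ht)
  have harg : HasDerivAt (fun t : ℝ ↦ t⁻¹ • v) (-t⁻¹ • (t⁻¹ • v)) t := by
    convert! (hasDerivAt_inv ht).smul_const v using 1
    rw [smul_smul]
    congr 1
    field_simp
  have hker : HasDerivAt (fun t : ℝ ↦ P (t⁻¹ • v))
      (-t⁻¹ * (t⁻¹ * fderiv ℝ P (t⁻¹ • v) v)) t := by
    convert! (hP _).hasFDerivAt.comp_hasDerivAt t harg using 1
    simp only [map_smul, smul_eq_mul]
  convert! hpow.mul hker using 1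
  rw [rescale, h, map_smul, smul_eq_mul]
  rcases k with - | k
  · simp
  · simp only [Nat.add_sub_cancel]
    field_simp
    ring

lemma lapl_eq_sum_testPartial (S : Kernel n) :
    lapl S = ⇑(∑ i, testPartial i (testPartial i S)) := by
  funext z
  rw [lapl_eq_sum]
  simp [coe_testPartial]

lemma hasDerivAt_scaledAverage {P S : Kernel n} (hf : Integrable f) (h : IsScalePotential k P S)
    (ht : 0 < t) (x : 𝔼 n) :
    HasDerivAt (fun t ↦ scaledAverage k P f t x) (scaledAverage (k + 1) (lapl S) f t x) t := by
  have hlapl := lapl_eq_sum_testPartial S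
  set L : Kernel n := ∑ i, testPartial i (testPartial i S)
  obtain ⟨C, hC⟩ := L.hasCompactSupport.exists_bound_of_continuous L.continuous
  rw [hlapl]
  refine (hasDerivAt_integral_of_dominated_loc_of_deriv_le (Ioi_mem_nhds (half_lt_self ht))
    (Eventually.of_forall fun s ↦ (integrable_mul_rescale hf k s P x).aestronglyMeasurable)
    (integrable_mul_rescale hf k t P x)
    (integrable_mul_rescale hf (k + 1) t L x).aestronglyMeasurable
    (bound := fun y ↦ ‖f y‖ * (((t / 2) ^ (k + 1))⁻¹ * C))
    (F' := fun s y ↦ f y * rescale (k + 1) s L (x - y))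
    (ae_of_all _ fun y s hs ↦ ?_) (hf.norm.mul_const _) (ae_of_all _ fun y s hs ↦ ?_)).2
  · have hs' : t / 2 < s := hs
    rw [rescale, norm_mul, norm_mul, norm_inv, norm_pow, Real.norm_of_nonneg (by linarith : 0 ≤ s)]
    gcongr
    exact hC _
  · have hs0 : s ≠ 0 := ((half_pos ht).trans hs).ne'
    rw [← hlapl]
    exact (hasDerivAt_rescale (differentiable_test P) h hs0 (x - y)).const_mul (f y)

lemma fderiv_rescale_apply (k : ℕ) (t : ℝ) (P : Kernel n) (v w : 𝔼 n) :
    fderiv ℝ (rescale k t P) v w = ∑ j, w j * rescale (k + 1) t (partialDeriv j P) v := by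
  have hP : HasFDerivAt (fun v ↦ P (t⁻¹ • v)) ((fderiv ℝ P (t⁻¹ • v)).comp (t⁻¹ • .id ℝ _)) v :=
    (differentiable_test P _).hasFDerivAt.comp v ((hasFDerivAt_id v).const_smul t⁻¹)
  have h : HasFDerivAt (rescale k t P) _ v := hP.const_mul _
  rw [h.fderiv]
  simp only [smul_apply, ContinuousLinearMap.comp_apply, ContinuousLinearMap.id_apply, smul_eq_mul,
    map_smul, fderiv_apply_eq_sum_partialDeriv, Finset.mul_sum, rescale, pow_succ, mul_inv]
  exact Finset.sum_congr rfl fun j _ ↦ by ring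

lemma hasFDerivAt_scaledAverage (hf : Integrable f) (k : ℕ) (ht : t ≠ 0) (P : Kernel n) (x : 𝔼 n) :
    HasFDerivAt (scaledAverage k P f t)
      (∑ j, scaledAverage (k + 1) (partialDeriv j P) f t x • EuclideanSpace.proj j : 𝔼 n →L[ℝ] ℝ)
      x := by
  have hsupp := hasCompactSupport_rescale k ht P
  have hsmooth : ContDiff ℝ 1 (rescale k t P) := (contDiff_rescale k t P).of_le (by norm_num)
  convert! hsupp.hasFDerivAt_convolution_right (ContinuousLinearMap.mul ℝ ℝ)
    hf.locallyIntegrable hsmooth x using 1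
  ext w
  rw [convolution_precompR_apply _ hf.locallyIntegrable (hsupp.fderiv ℝ)
    (hsmooth.continuous_fderiv one_ne_zero)]
  simp only [convolution_def, fderiv_rescale_apply, ContinuousLinearMap.mul_apply', Finset.mul_sum,
    mul_left_comm (f _), ← coe_testPartial]
  rw [integral_finsetSum _ fun j _ ↦
    (integrable_mul_rescale hf (k + 1) t (testPartial j P) x).const_mul (w j)]
  simp only [integral_const_mul, sum_apply, smul_apply, smul_eq_mul, scaledAverage,
    PiLp.proj_apply, mul_comm]

lemma exists_abs_scaledAverage_sub_le (hf : Integrable f) (k : ℕ) (P : Kernel n) :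
    ∃ L, ∀ t, 0 < t → ∀ x y,
      |scaledAverage k P f t x - scaledAverage k P f t y| ≤ L * (t ^ (k + 1))⁻¹ * dist x y := by
  obtain ⟨C, hC⟩ := P.contDiff.lipschitzWith_of_hasCompactSupport P.hasCompactSupport (by simp)
  refine ⟨(∫ z, ‖f z‖) * C, fun t ht x y ↦ ?_⟩
  rw [scaledAverage, scaledAverage, ← integral_sub (integrable_mul_rescale hf k t P x)
    (integrable_mul_rescale hf k t P y), mul_assoc, mul_assoc, ← integral_mul_const,
    ← Real.norm_eq_abs]
  refine norm_integral_le_of_norm_le (hf.norm.mul_const _) (ae_of_all _ fun z ↦ ?_)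
  have hlip : |P (t⁻¹ • (x - z)) - P (t⁻¹ • (y - z))| ≤ C * (t⁻¹ * dist x y) := by
    simpa [← Real.dist_eq, dist_smul₀, abs_of_pos ht] using
      hC.dist_le_mul (t⁻¹ • (x - z)) (t⁻¹ • (y - z))
  rw [← mul_sub, norm_mul, rescale, rescale, ← mul_sub, norm_mul, Real.norm_eq_abs (_ - _),
    Real.norm_of_nonneg (by positivity : 0 ≤ (t ^ k)⁻¹)]
  refine mul_le_mul_of_nonneg_left ?_ (norm_nonneg _)
  calc (t ^ k)⁻¹ * |P (t⁻¹ • (x - z)) - P (t⁻¹ • (y - z))|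
      ≤ (t ^ k)⁻¹ * (C * (t⁻¹ * dist x y)) := by gcongr
    _ = C * ((t ^ (k + 1))⁻¹ * dist x y) := by rw [pow_succ, mul_inv]; ring

end ScaledAverages

section ScaleAsymptotics

variable {x₀ : 𝔼 n} {F G : ℝ × 𝔼 n → ℝ} {r s : ℝ}

/-- The filter of pairs `(t, x)` with `t ↓ 0` and `x → x₀`. -/
abbrev scaleNhds (x₀ : 𝔼 n) : Filter (ℝ × 𝔼 n) := 𝓝[>] 0 ×ˢ 𝓝 x₀

lemma eventually_scaleNhds_mem_Ioo (x₀ : 𝔼 n) : ∀ᶠ q in scaleNhds x₀, q.1 ∈ Ioo 0 1 :=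
  tendsto_fst.eventually (Ioo_mem_nhdsGT one_pos)

/-- `F (t, x) = O(t ^ β)` as `t ↓ 0`, `x → x₀`, for some exponent `β > s`. -/
def HasOrderGT (s : ℝ) (F : ℝ × 𝔼 n → ℝ) (x₀ : 𝔼 n) : Prop :=
  ∃ β > s, F =O[scaleNhds x₀] fun q ↦ q.1 ^ β

lemma isBigO_rpow_scaleNhds (h : r ≤ s) :
    (fun q : ℝ × 𝔼 n ↦ q.1 ^ s) =O[scaleNhds x₀] fun q ↦ q.1 ^ r := by
  refine .of_bound 1 ?_
  filter_upwards [eventually_scaleNhds_mem_Ioo x₀] with q hq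
  rw [one_mul, Real.norm_of_nonneg (Real.rpow_nonneg hq.1.le _),
    Real.norm_of_nonneg (Real.rpow_nonneg hq.1.le _)]
  exact Real.rpow_le_rpow_of_exponent_ge hq.1 hq.2.le h

lemma HasOrderGT.add (hF : HasOrderGT s F x₀) (hG : HasOrderGT s G x₀) :
    HasOrderGT s (fun q ↦ F q + G q) x₀ := by
  obtain ⟨β, hβ, hF⟩ := hF
  obtain ⟨γ, hγ, hG⟩ := hG
  exact ⟨min β γ, lt_min hβ hγ, (hF.trans (isBigO_rpow_scaleNhds (min_le_left _ _))).add
    (hG.trans (isBigO_rpow_scaleNhds (min_le_right _ _)))⟩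

lemma HasOrderGT.sum {ι : Type*} {F : ι → ℝ × 𝔼 n → ℝ} (I : Finset ι)
    (hF : ∀ i, HasOrderGT s (F i) x₀) : HasOrderGT s (fun q ↦ ∑ i ∈ I, F i q) x₀ := by
  induction I using Finset.cons_induction with
  | empty => exact ⟨s + 1, by simp, by simpa using Asymptotics.isBigO_zero _ _⟩
  | cons i I hi ih => simpa only [Finset.sum_cons] using (hF i).add ih

lemma HasOrderGT.fst_mul (hF : HasOrderGT s F x₀) : HasOrderGT (s + 1) (fun q ↦ q.1 * F q) x₀ := by
  obtain ⟨β, hβ, hF⟩ := hF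
  refine ⟨β + 1, by linarith, ((Asymptotics.isBigO_refl Prod.fst _).mul hF).congr' .rfl ?_⟩
  filter_upwards [eventually_scaleNhds_mem_Ioo x₀] with q hq
  rw [Real.rpow_add_one hq.1.ne', mul_comm]

lemma HasOrderGT.congr' (hF : HasOrderGT s F x₀) (h : F =ᶠ[scaleNhds x₀] G) :
    HasOrderGT s G x₀ :=
  let ⟨β, hβ, hO⟩ := hF
  ⟨β, hβ, hO.congr' h .rfl⟩

lemma HasOrderGT.tendsto_zero (hF : HasOrderGT 0 F x₀) : Tendsto F (scaleNhds x₀) (𝓝 0) := by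
  obtain ⟨β, hβ, hO⟩ := hF
  have hpow : Tendsto (fun t : ℝ ↦ t ^ β) (𝓝[>] 0) (𝓝 0) := by
    simpa [Real.zero_rpow hβ.ne'] using
      ((Real.continuousAt_rpow_const 0 β (.inr hβ.le)).tendsto.mono_left nhdsWithin_le_nhds)
  exact hO.trans_tendsto (hpow.comp tendsto_fst)

lemma HasOrderGT.eventually_tendsto_zero (hF : HasOrderGT 0 F x₀) :
    ∀ᶠ x in 𝓝 x₀, Tendsto (fun t ↦ F (t, x)) (𝓝[>] 0) (𝓝 0) := by
  obtain ⟨β, hβ, hO⟩ := hF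
  obtain ⟨C, hC⟩ := hO.bound
  have hpow : Tendsto (fun t : ℝ ↦ C * ‖t ^ β‖) (𝓝[>] 0) (𝓝 0) := by
    simpa [Real.zero_rpow hβ.ne'] using
      ((Real.continuousAt_rpow_const 0 β (.inr hβ.le)).tendsto.norm.const_mul C).mono_left
        nhdsWithin_le_nhds
  filter_upwards [(eventually_swap_iff.1 hC).curry] with x hx
  exact squeeze_zero_norm' hx hpow

/-- Local Hölder continuity around `x₀`, with an unspecified positive exponent. -/
def HolderAt (f : 𝔼 n → ℝ) (x₀ : 𝔼 n) : Prop :=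
  ∃ α : ℝ, 0 < α ∧ (fun p : 𝔼 n × 𝔼 n ↦ f p.1 - f p.2) =O[𝓝 (x₀, x₀)] fun p ↦ dist p.1 p.2 ^ α

variable {f g : 𝔼 n → ℝ}

lemma isBigO_dist_rpow (h : r ≤ s) (hr : 0 < r) :
    (fun p : 𝔼 n × 𝔼 n ↦ dist p.1 p.2 ^ s) =O[𝓝 (x₀, x₀)] fun p ↦ dist p.1 p.2 ^ r := by
  have hdist : Tendsto (fun p : 𝔼 n × 𝔼 n ↦ dist p.1 p.2) (𝓝 (x₀, x₀)) (𝓝 0) := by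
    simpa using (continuous_dist (α := 𝔼 n)).tendsto (x₀, x₀)
  refine .of_bound 1 ?_
  filter_upwards [hdist.eventually (gt_mem_nhds one_pos)] with p hp
  rw [one_mul, Real.norm_of_nonneg (by positivity), Real.norm_of_nonneg (by positivity)]
  exact Real.rpow_le_rpow_of_exponent_ge' dist_nonneg hp.le hr.le h

lemma HolderAt.add (hf : HolderAt f x₀) (hg : HolderAt g x₀) :
    HolderAt (fun x ↦ f x + g x) x₀ := by
  obtain ⟨α, hα, hf⟩ := hf
  obtain ⟨β, hβ, hg⟩ := hg
  refine ⟨min α β, lt_min hα hβ, ?_⟩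
  simpa only [add_sub_add_comm] using
    (hf.trans (isBigO_dist_rpow (min_le_left _ _) (lt_min hα hβ))).add
      (hg.trans (isBigO_dist_rpow (min_le_right _ _) (lt_min hα hβ)))

lemma HolderAt.neg (hf : HolderAt f x₀) : HolderAt (fun x ↦ -f x) x₀ := by
  obtain ⟨α, hα, hf⟩ := hf
  exact ⟨α, hα, hf.neg_left.congr_left fun p ↦ by ring⟩

lemma HolderAt.sum {ι : Type*} {f : ι → 𝔼 n → ℝ} (I : Finset ι) (hf : ∀ i, HolderAt (f i) x₀) :
    HolderAt (fun x ↦ ∑ i ∈ I, f i x) x₀ := by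
  induction I using Finset.cons_induction with
  | empty => exact ⟨1, one_pos, by simpa using Asymptotics.isBigO_zero _ _⟩
  | cons i I hi ih => simpa only [Finset.sum_cons] using (hf i).add ih

lemma HolderAt.congr' (hf : HolderAt f x₀) (h : f =ᶠ[𝓝 x₀] g) : HolderAt g x₀ := by
  obtain ⟨α, hα, hO⟩ := hf
  refine ⟨α, hα, hO.congr' ?_ .rfl⟩
  rw [nhds_prod_eq]
  filter_upwards [h.prod_mk h] with p hp
  rw [hp.1, hp.2]

lemma HolderAt.continuousAt (hf : HolderAt f x₀) : ContinuousAt f x₀ := by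
  obtain ⟨α, hα, hO⟩ := hf
  have hdist : Tendsto (fun p : 𝔼 n × 𝔼 n ↦ dist p.1 p.2 ^ α) (𝓝 (x₀, x₀)) (𝓝 0) := by
    have h := (continuous_dist (α := 𝔼 n)).tendsto (x₀, x₀)
    rw [dist_self] at h
    simpa [Real.zero_rpow hα.ne'] using h.rpow_const (.inr hα.le)
  have hpair : Tendsto (fun x ↦ (x, x₀)) (𝓝 x₀) (𝓝 (x₀, x₀)) :=
    (Continuous.prodMk_left x₀).tendsto x₀
  exact tendsto_sub_nhds_zero_iff.1 ((hO.trans_tendsto hdist).comp hpair)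

lemma holderAt_of_contDiffAt (hf : ContDiffAt ℝ 1 f x₀) : HolderAt f x₀ :=
  ⟨1, one_pos, by simpa [dist_eq_norm] using
    ((hf.hasStrictFDerivAt one_ne_zero).isBigO_sub).norm_right⟩

lemma HolderAt.mul (hf : HolderAt f x₀) (hg : HolderAt g x₀) :
    HolderAt (fun x ↦ f x * g x) x₀ := by
  have hfb : (fun p : 𝔼 n × 𝔼 n ↦ f p.1) =O[𝓝 (x₀, x₀)] fun _ ↦ (1 : ℝ) :=
    (hf.continuousAt.tendsto.isBigO_one ℝ).comp_tendsto continuousAt_fst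
  have hgb : (fun p : 𝔼 n × 𝔼 n ↦ g p.2) =O[𝓝 (x₀, x₀)] fun _ ↦ (1 : ℝ) :=
    (hg.continuousAt.tendsto.isBigO_one ℝ).comp_tendsto continuousAt_snd
  obtain ⟨α, hα, hf⟩ := hf
  obtain ⟨β, hβ, hg⟩ := hg
  have hα' := isBigO_dist_rpow (x₀ := x₀) (min_le_left α β) (lt_min hα hβ)
  have hβ' := isBigO_dist_rpow (x₀ := x₀) (min_le_right α β) (lt_min hα hβ)
  refine ⟨min α β, lt_min hα hβ, ?_⟩
  have hleft := ((hf.trans hα').mul hgb).congr_right fun p ↦ mul_one _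
  have hright := (hfb.mul (hg.trans hβ')).congr_right fun p ↦ one_mul _
  exact (hleft.add hright).congr_left fun p ↦ by ring

end ScaleAsymptotics

section AverageOrders

variable {m : ℕ} {s : ℝ} {f : 𝔼 n → ℝ} {x₀ : 𝔼 n}

lemma eventually_forall_mem_tsupport {p : 𝔼 n × 𝔼 n → Prop} (h : ∀ᶠ z in 𝓝 (x₀, x₀), p z)
    (P : Kernel n) :
    ∀ᶠ q in scaleNhds x₀, ∀ y, q.1⁻¹ • (q.2 - y) ∈ tsupport P → p (y, q.2) := by
  have hcpt : ∀ᶠ q in 𝓝 ((0 : ℝ), x₀), ∀ z ∈ tsupport P, p (q.2 - q.1 • z, q.2) := by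
    refine P.hasCompactSupport.isCompact.eventually_forall_of_forall_eventually fun z _ ↦ ?_
    have hcont : Continuous fun w : (ℝ × 𝔼 n) × 𝔼 n ↦ (w.1.2 - w.1.1 • w.2, w.1.2) := by fun_prop
    exact (hcont.tendsto' ((0, x₀), z) (x₀, x₀) (by simp)).eventually h
  have hle : scaleNhds x₀ ≤ 𝓝 (0, x₀) := by
    rw [nhds_prod_eq]
    exact prod_mono nhdsWithin_le_nhds le_rfl
  filter_upwards [hcpt.filter_mono hle, eventually_scaleNhds_mem_Ioo x₀] with q hq hq0 y hy
  simpa [smul_inv_smul₀ hq0.1.ne'] using hq _ hy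

lemma hasOrderGT_scaledAverage_of_isBigO_one (hf : f =O[𝓝 x₀] fun _ ↦ (1 : ℝ)) (hs : s < -m)
    (P : Kernel n) : HasOrderGT s (fun q ↦ scaledAverage (n + m) P f q.1 q.2) x₀ := by
  obtain ⟨C, hC⟩ := hf.bound
  refine ⟨-m, hs, .of_bound (C * ∫ z, |P z|) ?_⟩
  filter_upwards [eventually_scaleNhds_mem_Ioo x₀,
    eventually_forall_mem_tsupport (continuousAt_fst.eventually hC) P] with q hq hfq
  refine (abs_scaledAverage_le (M := C) m hq.1 P fun y hy ↦ by simpa using hfq y hy).trans_eq ?_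
  rw [Real.norm_of_nonneg (by have := hq.1.le; positivity), Real.rpow_neg hq.1.le,
    Real.rpow_natCast]
  ring

lemma HolderAt.hasOrderGT_scaledAverage (hf : HolderAt f x₀) (m : ℕ) {P : Kernel n}
    (hP : ∫ z, P z = 0) : HasOrderGT (-m) (fun q ↦ scaledAverage (n + m) P f q.1 q.2) x₀ := by
  obtain ⟨α, hα, hf⟩ := hf
  obtain ⟨C, hC0, hC⟩ := hf.exists_nonneg
  obtain ⟨R, hR0, hR⟩ := P.hasCompactSupport.isCompact.isBounded.exists_pos_norm_le
  refine ⟨α - m, by linarith, .of_bound (C * R ^ α * ∫ z, |P z|) ?_⟩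
  filter_upwards [eventually_scaleNhds_mem_Ioo x₀,
    eventually_forall_mem_tsupport hC.bound P] with q hq hfq
  have ht : 0 < q.1 := hq.1
  have hosc (y) (hy : q.1⁻¹ • (q.2 - y) ∈ tsupport P) : |f y - f q.2| ≤ C * (R * q.1) ^ α := by
    have hdist : dist y q.2 ≤ R * q.1 := by
      have h := hR _ hy
      rwa [norm_smul, norm_inv, Real.norm_of_nonneg ht.le, inv_mul_le_iff₀ ht, mul_comm,
        ← dist_eq_norm, dist_comm] at h
    refine (hfq y hy).trans ?_
    rw [Real.norm_of_nonneg (by positivity)]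
    gcongr
  refine (abs_scaledAverage_le_of_integral_eq_zero m ht P hP (by positivity) hosc).trans_eq ?_
  rw [Real.norm_of_nonneg (by positivity), Real.rpow_sub ht, Real.rpow_natCast,
    Real.mul_rpow hR0.le ht.le]
  field_simp

lemma integral_testPartial_eq_zero (j : Fin n) (P : Kernel n) : ∫ z, testPartial j P z = 0 := by
  have h := integral_mul_partialDeriv (Ω := ⊤) (f := fun _ ↦ 1) contDiffOn_const P j
  simpa [coe_testPartial, partialDeriv] using h

end AverageOrders

section AverageLimits

variable {k : ℕ} {f : 𝔼 n → ℝ} {x₀ : 𝔼 n} {P S : Kernel n}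

lemma exists_tendsto_abs_sub_le_rpow {F F' : ℝ → ℝ} {δ C β : ℝ} (hδ : 0 < δ) (hβ : 0 < β)
    (hF : ∀ t ∈ Ioo 0 δ, HasDerivAt F (F' t) t)
    (hF' : ∀ t ∈ Ioo 0 δ, |F' t| ≤ C * t ^ (β - 1)) :
    ∃ L, Tendsto F (𝓝[>] 0) (𝓝 L) ∧ ∀ t ∈ Ioo 0 δ, |F t - L| ≤ C / β * t ^ β := by
  have hG (r : ℝ) (hr : 0 < r) : HasDerivAt (fun r ↦ C / β * r ^ β) (C * r ^ (β - 1)) r := by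
    convert! (Real.hasDerivAt_rpow_const (p := β) (.inl hr.ne')).const_mul (C / β) using 1
    field_simp
  have hincr (s t : ℝ) (hs : 0 < s) (hst : s ≤ t) (ht : t < δ) :
      |F t - F s| ≤ C / β * t ^ β - C / β * s ^ β := by
    have hmem {r : ℝ} (hr : r ∈ Icc s t) : r ∈ Ioo 0 δ := ⟨hs.trans_le hr.1, hr.2.trans_lt ht⟩
    exact image_norm_le_of_norm_deriv_right_le_deriv_boundary' (f := fun r ↦ F r - F s) (f' := F')
      (B := fun r ↦ C / β * r ^ β - C / β * s ^ β) (B' := fun r ↦ C * r ^ (β - 1))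
      (fun r hr ↦ ((hF r (hmem hr)).sub_const _).continuousAt.continuousWithinAt)
      (fun r hr ↦ ((hF r (hmem (Ico_subset_Icc_self hr))).sub_const _).hasDerivWithinAt) (by simp)
      (fun r hr ↦ ((hG r (hmem hr).1).sub_const _).continuousAt.continuousWithinAt)
      (fun r hr ↦ ((hG r (hs.trans_le hr.1)).sub_const _).hasDerivWithinAt)
      (fun r hr ↦ hF' r (hmem (Ico_subset_Icc_self hr))) (right_mem_Icc.2 hst)
  have hpow : Tendsto (fun t : ℝ ↦ C / β * t ^ β) (𝓝[>] 0) (𝓝 0) := by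
    simpa [Real.zero_rpow hβ.ne'] using
      ((Real.continuousAt_rpow_const 0 β (.inr hβ.le)).tendsto.const_mul (C / β)).mono_left
        nhdsWithin_le_nhds
  have hcauchy : Cauchy (map F (𝓝[>] 0)) := by
    have hpair : Tendsto (fun p : ℝ × ℝ ↦ |C / β * p.1 ^ β - C / β * p.2 ^ β|)
        (𝓝[>] 0 ×ˢ 𝓝[>] 0) (𝓝 0) := by
      simpa using ((hpow.comp tendsto_fst).sub (hpow.comp tendsto_snd)).abs
    refine cauchy_map_iff'.2 (tendsto_uniformity_iff_dist_tendsto_zero.2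
      (squeeze_zero' (.of_forall fun _ ↦ dist_nonneg) ?_ hpair))
    have hIoo : Ioo 0 δ ∈ 𝓝[>] 0 := Ioo_mem_nhdsGT hδ
    filter_upwards [prod_mem_prod hIoo hIoo] with p ⟨h₁, h₂⟩
    rcases le_total p.1 p.2 with h | h
    · rw [dist_comm, Real.dist_eq, abs_sub_comm (C / β * _)]
      exact (hincr _ _ h₁.1 h h₂.2).trans (le_abs_self _)
    · exact (hincr _ _ h₂.1 h h₁.2).trans (le_abs_self _)
  obtain ⟨L, hL⟩ := cauchy_map_iff_exists_tendsto.1 hcauchy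
  refine ⟨L, hL, fun t ht ↦ ?_⟩
  refine le_of_tendsto_of_tendsto (tendsto_const_nhds.sub hL).abs
    (by simpa using tendsto_const_nhds.sub hpow) ?_
  filter_upwards [Ioo_mem_nhdsGT ht.1] with s hs using hincr s t hs.1 hs.2.le ht.2

/-- The limit of the averages of `f` as the scale tends to `0`. -/
def avgLim (k : ℕ) (P f : 𝔼 n → ℝ) (x : 𝔼 n) : ℝ :=
  limUnder (𝓝[>] 0) fun t ↦ scaledAverage k P f t x

/-- Near `x₀` the averages of `f` at scale `t` converge at a rate `O(t ^ β)` for some `β > 0`. -/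
def HasAvgRate (k : ℕ) (P f : 𝔼 n → ℝ) (x₀ : 𝔼 n) : Prop :=
  HasOrderGT 0 (fun q ↦ scaledAverage k P f q.1 q.2 - avgLim k P f q.2) x₀

lemma hasAvgRate_of_hasOrderGT_deriv (hf : Integrable f) (h : IsScalePotential k P S)
    (hlapl : HasOrderGT (-1) (fun q ↦ scaledAverage (k + 1) (lapl S) f q.1 q.2) x₀) :
    HasAvgRate k P f x₀ := by
  obtain ⟨β, hβ, hO⟩ := hlapl
  obtain ⟨C, hC⟩ := hO.bound
  obtain ⟨p, hp, q, hq, hpq⟩ := eventually_prod_iff.1 hC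
  obtain ⟨δ, hδ, hδp⟩ := mem_nhdsGT_iff_exists_Ioo_subset.1 hp
  have hδ0 : 0 < δ := hδ
  have hβ0 : 0 < β + 1 := by linarith
  refine ⟨β + 1, hβ0, .of_bound (C / (β + 1)) ?_⟩
  filter_upwards [prod_mem_prod (Ioo_mem_nhdsGT hδ0) hq] with ⟨t, x⟩ ⟨ht, hx⟩
  obtain ⟨L, hL, hrate⟩ := exists_tendsto_abs_sub_le_rpow hδ0 hβ0
    (fun r hr ↦ hasDerivAt_scaledAverage hf h hr.1 x) fun r hr ↦ by
      simpa [abs_of_pos (Real.rpow_pos_of_pos hr.1 β)] using hpq (hδp hr) hx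
  have hlim : avgLim k P f x = L := hL.limUnder_eq
  simpa [hlim, abs_of_pos (Real.rpow_pos_of_pos ht.1 (β + 1))] using hrate t ht

/-- `Δ φ = ∑ i, ∂ᵢ (a i) + b` on `Ω`, in the sense of distributions. -/
def IsWeakPoisson (Ω : Opens (𝔼 n)) (φ : 𝔼 n → ℝ) (a : Fin n → 𝔼 n → ℝ) (b : 𝔼 n → ℝ) : Prop :=
  ∀ ψ : 𝓓(Ω, ℝ),
    ∫ x, φ x * lapl ψ x = (∫ x, b x * ψ x) - ∑ i, ∫ x, a i x * partialDeriv i ψ x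

variable {Ω : Opens (𝔼 n)} {a : Fin n → 𝔼 n → ℝ} {b : 𝔼 n → ℝ} {t : ℝ} {x : 𝔼 n}

lemma partialDeriv_rescale_sub (k : ℕ) (t : ℝ) (P : Kernel n) (x : 𝔼 n) (i : Fin n) (y : 𝔼 n) :
    partialDeriv i (fun y ↦ rescale k t P (x - y)) y =
      -rescale (k + 1) t (partialDeriv i P) (x - y) := by
  have hdiff : DifferentiableAt ℝ (rescale k t P) (x - y) :=
    (contDiff_rescale k t P).differentiable (by simp) _
  have h : HasFDerivAt (fun y ↦ rescale k t P (x - y)) _ y :=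
    hdiff.hasFDerivAt.comp y ((hasFDerivAt_id y).const_sub x)
  rw [partialDeriv, h.fderiv, ContinuousLinearMap.comp_apply, neg_apply, map_neg,
    ContinuousLinearMap.id_apply, fderiv_rescale_apply]
  simp

lemma lapl_rescale_sub (k : ℕ) (t : ℝ) (P : Kernel n) (x y : 𝔼 n) :
    lapl (fun y ↦ rescale k t P (x - y)) y = rescale (k + 2) t (lapl P) (x - y) := by
  have hfst (i : Fin n) : partialDeriv i (fun y ↦ rescale k t P (x - y)) =
      fun y ↦ -rescale (k + 1) t (testPartial i P) (x - y) :=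
    funext fun y ↦ partialDeriv_rescale_sub k t P x i y
  have hneg (i : Fin n) (F : 𝔼 n → ℝ) : partialDeriv i (fun y ↦ -F y) y = -partialDeriv i F y := by
    simp [partialDeriv, fderiv_fun_neg]
  simp only [lapl_eq_sum, hfst, hneg, partialDeriv_rescale_sub, neg_neg]
  simp only [coe_testPartial, rescale, Finset.mul_sum]

lemma exists_test_eq_rescale_sub (k : ℕ) (ht : 0 < t) (P : Kernel n)
    (hΩ : ∀ y, t⁻¹ • (x - y) ∈ tsupport P → y ∈ Ω) :
    ∃ ψ : 𝓓(Ω, ℝ), ⇑ψ = fun y ↦ rescale k t P (x - y) := by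
  have hsupp : HasCompactSupport fun y ↦ rescale k t P (x - y) :=
    (hasCompactSupport_rescale k ht.ne' P).comp_isClosedEmbedding
      (Homeomorph.subLeft x).isClosedEmbedding
  refine ⟨⟨fun y ↦ rescale k t P (x - y),
    (contDiff_rescale k t P).comp (contDiff_const.sub contDiff_id), hsupp, ?_⟩, rfl⟩
  have hcont : Continuous fun y ↦ t⁻¹ • (x - y) := by fun_prop
  exact fun y hy ↦ hΩ y (tsupport_comp_subset_preimage P hcont (tsupport_mul_subset_right hy))

lemma IsWeakPoisson.scaledAverage_lapl (hw : IsWeakPoisson Ω f a b) (k : ℕ) (ht : 0 < t)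
    (S : Kernel n) (hΩ : ∀ y, t⁻¹ • (x - y) ∈ tsupport S → y ∈ Ω) :
    scaledAverage (k + 1) (lapl S) f t x =
      ∑ i, scaledAverage k (partialDeriv i S) (a i) t x + t * scaledAverage k S b t x := by
  obtain ⟨ψ, hψ⟩ := exists_test_eq_rescale_sub k ht S hΩ
  have h := hw ψ
  simp only [hψ, partialDeriv_rescale_sub, lapl_rescale_sub] at h
  have hscale (j : ℕ) (Q F : 𝔼 n → ℝ) :
      scaledAverage j Q F t x = t * scaledAverage (j + 1) Q F t x := by
    rw [scaledAverage, scaledAverage, ← integral_const_mul]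
    refine integral_congr_ae (ae_of_all _ fun y ↦ ?_)
    simp only [rescale, pow_succ, mul_inv]
    field_simp
  simp only [mul_neg, integral_neg, Finset.sum_neg_distrib] at h
  replace h : scaledAverage (k + 2) (lapl S) f t x = scaledAverage k S b t x +
      ∑ i, scaledAverage (k + 1) (partialDeriv i S) (a i) t x := by
    simpa only [scaledAverage, sub_neg_eq_add] using h
  rw [hscale, h, mul_add, Finset.mul_sum, add_comm]
  simp only [← hscale]

lemma IsWeakPoisson.hasAvgRate (hw : IsWeakPoisson Ω f a b) (hf : Integrable f)
    (h : IsScalePotential k P S) (hx : x₀ ∈ Ω)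
    (ha : ∀ i, HasOrderGT (-1) (fun q ↦ scaledAverage k (partialDeriv i S) (a i) q.1 q.2) x₀)
    (hb : HasOrderGT (-2) (fun q ↦ scaledAverage k S b q.1 q.2) x₀) : HasAvgRate k P f x₀ := by
  refine hasAvgRate_of_hasOrderGT_deriv hf h ?_
  have hb' : HasOrderGT (-1) (fun q ↦ q.1 * scaledAverage k S b q.1 q.2) x₀ := by
    convert! hb.fst_mul using 1
    norm_num
  refine ((HasOrderGT.sum Finset.univ ha).add hb').congr' ?_
  filter_upwards [eventually_scaleNhds_mem_Ioo x₀, eventually_forall_mem_tsupport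
    (continuousAt_fst.eventually (Ω.isOpen.mem_nhds hx)) S] with q hq hqΩ
  exact (hw.scaledAverage_lapl k hq.1 S hqΩ).symm

end AverageLimits

section AverageLimitRegularity

variable {k : ℕ} {f : 𝔼 n → ℝ} {x₀ : 𝔼 n} {P : Kernel n}

lemma tendsto_dist_rpow_offDiag (x₀ : 𝔼 n) {γ : ℝ} (hγ : 0 < γ) :
    Tendsto (fun p : 𝔼 n × 𝔼 n ↦ dist p.1 p.2 ^ γ) (𝓝 (x₀, x₀) ⊓ 𝓟 {p | p.1 ≠ p.2})
      (𝓝[>] 0) := by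
  have hcont : Continuous fun p : 𝔼 n × 𝔼 n ↦ dist p.1 p.2 ^ γ :=
    continuous_dist.rpow_const fun _ ↦ .inr hγ.le
  refine tendsto_nhdsWithin_iff.2 ⟨(hcont.tendsto' (x₀, x₀) 0 ?_).mono_left inf_le_left, ?_⟩
  · rw [dist_self, Real.zero_rpow hγ.ne']
  · filter_upwards [mem_inf_of_right (mem_principal_self _)] with p hp
    exact Real.rpow_pos_of_pos (dist_pos.2 hp) γ

-- Compare averages at two points `x, y` at the scale `t = dist x y ^ (β + k + 1)⁻¹`, which balances
-- the rate `t ^ β` against the Lipschitz constant `t⁻⁽ᵏ⁺¹⁾` of the averages.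
lemma HasAvgRate.holderAt_avgLim (h : HasAvgRate k P f x₀) (hf : Integrable f) :
    HolderAt (avgLim k P f) x₀ := by
  obtain ⟨β, hβ, hO⟩ := h
  obtain ⟨C, hC⟩ := hO.bound
  obtain ⟨L, hL⟩ := exists_abs_scaledAverage_sub_le hf k P
  have hden : 0 < β + (k + 1 : ℕ) := by positivity
  set γ : ℝ := (β + (k + 1 : ℕ))⁻¹ with hγ
  have hγ0 : 0 < γ := inv_pos.2 hden
  have hscale := tendsto_dist_rpow_offDiag x₀ hγ0
  have hfst := (hscale.prodMk (continuousAt_fst.tendsto.mono_left inf_le_left)).eventually hC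
  have hsnd := (hscale.prodMk (continuousAt_snd.tendsto.mono_left inf_le_left)).eventually hC
  refine ⟨γ * β, by positivity, .of_bound (C + L + C) ?_⟩
  filter_upwards [eventually_inf_principal.1 (hfst.and hsnd)] with ⟨x, y⟩ hxy
  rcases eq_or_ne x y with rfl | hne
  · simp [Real.zero_rpow (mul_pos hγ0 hβ).ne']
  obtain ⟨hx, hy⟩ := hxy hne
  have hd : 0 < dist x y := dist_pos.2 hne
  set t := dist x y ^ γ
  have ht : 0 < t := Real.rpow_pos_of_pos hd γ
  have hrate : t ^ β = dist x y ^ (γ * β) := (Real.rpow_mul hd.le γ β).symm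
  have hlip : (t ^ (k + 1))⁻¹ * dist x y = dist x y ^ (γ * β) := by
    rw [← Real.rpow_natCast t, ← Real.rpow_mul hd.le, ← Real.rpow_neg hd.le,
      ← Real.rpow_add_one hd.ne']
    congr 1
    rw [hγ]
    field_simp
    ring
  have hmid := hL t ht x y
  simp only [mul_assoc, hlip, Real.norm_eq_abs, hrate,
    abs_of_pos (Real.rpow_pos_of_pos hd (γ * β))] at hx hy hmid ⊢
  rw [abs_sub_comm] at hx
  calc |avgLim k P f x - avgLim k P f y|
      = |(avgLim k P f x - scaledAverage k P f t x) + (scaledAverage k P f t x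
          - scaledAverage k P f t y) + (scaledAverage k P f t y - avgLim k P f y)| := by ring_nf
    _ ≤ _ := abs_add_three _ _ _
    _ ≤ (C + L + C) * dist x y ^ (γ * β) := by linarith

lemma HasAvgRate.eventually_tendsto (h : HasAvgRate k P f x₀) :
    ∀ᶠ x in 𝓝 x₀, Tendsto (fun t ↦ scaledAverage k P f t x) (𝓝[>] 0) (𝓝 (avgLim k P f x)) := by
  filter_upwards [h.eventually_tendsto_zero] with x hx using tendsto_sub_nhds_zero_iff.1 hx

lemma HasAvgRate.hasFDerivAt_avgLim (h : HasAvgRate k P f x₀) (hf : Integrable f)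
    (h' : ∀ j, HasAvgRate (k + 1) (testPartial j P) f x₀) :
    HasFDerivAt (avgLim k P f)
      (∑ j, avgLim (k + 1) (testPartial j P) f x₀ • EuclideanSpace.proj j : 𝔼 n →L[ℝ] ℝ) x₀ := by
  refine hasFDerivAt_of_tendstoUniformlyOnFilter (l := 𝓝[>] (0 : ℝ)) (f := scaledAverage k P f)
    (f' := fun t x ↦ ∑ j, scaledAverage (k + 1) (testPartial j P) f t x • EuclideanSpace.proj j)
    (g' := fun x ↦ ∑ j, avgLim (k + 1) (testPartial j P) f x • EuclideanSpace.proj j)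
    ?_ ?_ h.eventually_tendsto
  · rw [tendstoUniformlyOnFilter_iff_tendsto, tendsto_uniformity_iff_dist_tendsto_zero]
    have hsum : Tendsto (fun q : ℝ × 𝔼 n ↦ ∑ j, (scaledAverage (k + 1) (testPartial j P) f q.1 q.2 -
        avgLim (k + 1) (testPartial j P) f q.2) • (EuclideanSpace.proj j : 𝔼 n →L[ℝ] ℝ))
        (scaleNhds x₀) (𝓝 0) := by
      simpa using tendsto_finsetSum Finset.univ fun j _ ↦
        (h' j).tendsto_zero.smul_const (EuclideanSpace.proj j : 𝔼 n →L[ℝ] ℝ)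
    simpa [dist_eq_norm', sub_smul, Finset.sum_sub_distrib] using hsum.norm
  · filter_upwards [eventually_scaleNhds_mem_Ioo x₀] with q hq
    exact hasFDerivAt_scaledAverage hf k hq.1.ne' P q.2

lemma ae_tendsto_scaledAverage (hf : Integrable f) {η : Kernel n} (hη : ∫ z, η z = 1) :
    ∀ᵐ x, Tendsto (fun t ↦ scaledAverage n η f t x) (𝓝[>] 0) (𝓝 (f x)) := by
  obtain ⟨C, hC⟩ := η.hasCompactSupport.exists_bound_of_continuous η.continuous
  obtain ⟨R, hR0, hR⟩ := η.hasCompactSupport.isCompact.isBounded.exists_pos_norm_le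
  set V := volume.real (Metric.closedBall (0 : 𝔼 n) 1)
  have hV : 0 < V :=
    ENNReal.toReal_pos (Metric.measure_closedBall_pos volume _ one_pos).ne'
      measure_closedBall_lt_top.ne
  have hrad : Tendsto (fun t : ℝ ↦ R * t) (𝓝[>] 0) (𝓝[>] 0) :=
    tendsto_nhdsWithin_iff.2
      ⟨tendsto_nhdsWithin_of_tendsto_nhds (Continuous.tendsto' (by fun_prop) 0 0 (mul_zero R)),
        eventually_mem_nhdsWithin.mono fun _ ht ↦ mul_pos hR0 ht⟩
  filter_upwards [IsUnifLocDoublingMeasure.ae_tendsto_average_norm_sub volume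
    hf.locallyIntegrable 1] with x hx
  have hball := hx (fun _ : ℝ ↦ x) (fun t ↦ R * t) hrad (by
    filter_upwards [self_mem_nhdsWithin] with t ht
    have ht : 0 < t := ht
    simpa using by positivity)
  simp only [scaledAverage, mul_comm (f _)]
  refine tendsto_integral_smul_of_tendsto_average_norm_sub (C * (R ^ n * V)) hball
    (.of_forall fun t ↦ hf.integrableOn) ?_ ?_ ?_
  · refine tendsto_const_nhds.congr' ?_
    filter_upwards [self_mem_nhdsWithin] with t ht
    simpa [hη] using (integral_rescale_sub 0 ht η x).symm
  · filter_upwards [self_mem_nhdsWithin] with t ht y hy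
    have ht : 0 < t := ht
    have h := hR (t⁻¹ • (x - y)) (subset_tsupport _ (right_ne_zero_of_mul hy))
    rw [norm_smul, norm_inv, Real.norm_of_nonneg ht.le, inv_mul_le_iff₀ ht, ← dist_eq_norm] at h
    rw [Metric.mem_closedBall, dist_comm]
    linarith
  · filter_upwards [self_mem_nhdsWithin] with t ht y
    have ht : 0 < t := ht
    rw [Measure.addHaar_real_closedBall' volume x (by positivity), finrank_euclideanSpace_fin,
      rescale, abs_mul, abs_of_pos (by positivity), mul_pow, le_div_iff₀ (by positivity)]
    calc (t ^ n)⁻¹ * |η (t⁻¹ • (x - y))| * (R ^ n * t ^ n * V)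
        = |η (t⁻¹ • (x - y))| * (R ^ n * V) := by field_simp
      _ ≤ C * (R ^ n * V) := by gcongr; exact hC _

lemma ae_avgLim_eq {Ω : Opens (𝔼 n)} {η : Kernel n} (h : ∀ x ∈ Ω, HasAvgRate n η f x)
    (hf : Integrable f) (hη : ∫ z, η z = 1) : ∀ᵐ x, x ∈ Ω → avgLim n η f x = f x := by
  filter_upwards [ae_tendsto_scaledAverage hf hη] with x hx hxΩ
  exact tendsto_nhds_unique (h x hxΩ).eventually_tendsto.self_of_nhds hx

end AverageLimitRegularity

section WeakPoissonRegularity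

variable {Ω : Opens (𝔼 n)} {f b : 𝔼 n → ℝ} {a : Fin n → 𝔼 n → ℝ} {x : 𝔼 n} {η K : Kernel n}

lemma partialDeriv_eq_of_hasFDerivAt {p : Fin n → ℝ}
    (hf : HasFDerivAt f (∑ j, p j • EuclideanSpace.proj j : 𝔼 n →L[ℝ] ℝ) x) (j : Fin n) :
    partialDeriv j f x = p j := by
  simp [partialDeriv, hf.fderiv]

lemma contDiffOn_succ_of_hasFDerivAt {s : Set (𝔼 n)} (hs : IsOpen s) {p : Fin n → 𝔼 n → ℝ} {m : ℕ}
    (hf : ∀ x ∈ s, HasFDerivAt f (∑ j, p j x • EuclideanSpace.proj j : 𝔼 n →L[ℝ] ℝ) x)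
    (hp : ∀ j, ContDiffOn ℝ m (p j) s) : ContDiffOn ℝ (m + 1) f s := by
  refine (contDiffOn_succ_iff_hasFDerivWithinAt_of_uniqueDiffOn hs.uniqueDiffOn).2
    ⟨by simp, _, ContDiffOn.sum fun j _ ↦ (hp j).smul contDiffOn_const,
      fun x hx ↦ (hf x hx).hasFDerivWithinAt⟩

lemma IsScalePotential.testPartial {k : ℕ} (h : IsScalePotential k η K) (j : Fin n) :
    IsScalePotential (k + 1) (testPartial j η) (testPartial j K) :=
  isScalePotential_partialDeriv h (η.contDiff.of_le (WithTop.coe_le_coe.2 le_top))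
    (K.contDiff.of_le (WithTop.coe_le_coe.2 le_top)) j

lemma IsWeakPoisson.hasAvgRate_of_isBigO_one (hw : IsWeakPoisson Ω f a b) (hf : Integrable f)
    (h : IsScalePotential n η K) (hx : x ∈ Ω) (ha : ∀ i, a i =O[𝓝 x] fun _ ↦ (1 : ℝ))
    (hb : b =O[𝓝 x] fun _ ↦ (1 : ℝ)) : HasAvgRate n η f x :=
  hw.hasAvgRate hf h hx
    (fun i ↦ hasOrderGT_scaledAverage_of_isBigO_one (m := 0) (ha i) (by simp) (testPartial i K))
    (hasOrderGT_scaledAverage_of_isBigO_one (m := 0) hb (by simp) K)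

lemma IsWeakPoisson.hasAvgRate_testPartial (hw : IsWeakPoisson Ω f a b) (hf : Integrable f)
    (h : IsScalePotential n η K) (hx : x ∈ Ω) (ha : ∀ i, HolderAt (a i) x)
    (hb : b =O[𝓝 x] fun _ ↦ (1 : ℝ)) (j : Fin n) : HasAvgRate (n + 1) (testPartial j η) f x := by
  refine hw.hasAvgRate hf (h.testPartial j) hx (fun i ↦ ?_)
    (hasOrderGT_scaledAverage_of_isBigO_one (m := 1) hb (by norm_num) (testPartial j K))
  simpa [coe_testPartial] using (ha i).hasOrderGT_scaledAverage 1
    (integral_testPartial_eq_zero i (testPartial j K))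

lemma IsWeakPoisson.hasAvgRate_testPartial_testPartial (hw : IsWeakPoisson Ω f 0 b)
    (hf : Integrable f) (h : IsScalePotential n η K) (hx : x ∈ Ω) (hb : HolderAt b x)
    (i j : Fin n) : HasAvgRate (n + 2) (testPartial i (testPartial j η)) f x := by
  refine hw.hasAvgRate hf ((h.testPartial j).testPartial i) hx
    (fun i ↦ ⟨0, by norm_num, (Asymptotics.isBigO_zero _ _).congr_left fun q ↦ ?_⟩) ?_
  · simp [scaledAverage]
  · simpa using hb.hasOrderGT_scaledAverage 2 (integral_testPartial_eq_zero i (testPartial j K))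

lemma IsWeakPoisson.exists_holderAt_ae_eq (hw : IsWeakPoisson Ω f a b) (hf : Integrable f)
    (hf0 : ∀ x ∉ Ω, f x = 0) (ha : ∀ x ∈ Ω, ∀ i, a i =O[𝓝 x] fun _ ↦ (1 : ℝ))
    (hb : ∀ x ∈ Ω, b =O[𝓝 x] fun _ ↦ (1 : ℝ)) :
    ∃ f' : 𝔼 n → ℝ, f' =ᵐ[volume] f ∧ (∀ x ∉ Ω, f' x = 0) ∧ ∀ x ∈ Ω, HolderAt f' x := by
  obtain ⟨η, K, h, hη⟩ := exists_isScalePotential_integral_eq_one n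
  have hrate : ∀ x ∈ Ω, HasAvgRate n η f x := fun x hx ↦
    hw.hasAvgRate_of_isBigO_one hf h hx (ha x hx) (hb x hx)
  refine ⟨indicator Ω (avgLim n η f), ?_, fun x hx ↦ indicator_of_notMem hx _, fun x hx ↦ ?_⟩
  · filter_upwards [ae_avgLim_eq hrate hf hη] with x hx
    by_cases hxΩ : x ∈ (Ω : Set (𝔼 n))
    · rw [indicator_of_mem hxΩ, hx hxΩ]
    · rw [indicator_of_notMem hxΩ, hf0 x hxΩ]
  · refine ((hrate x hx).holderAt_avgLim hf).congr' ?_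
    filter_upwards [Ω.isOpen.mem_nhds hx] with y hy using (indicator_of_mem hy _).symm

lemma IsWeakPoisson.hasFDerivAt (hw : IsWeakPoisson Ω f a b) (hf : Integrable f)
    (hfc : ContinuousOn f Ω) (h : IsScalePotential n η K) (hη : ∫ z, η z = 1)
    (ha : ∀ x ∈ Ω, ∀ i, HolderAt (a i) x) (hb : ∀ x ∈ Ω, b =O[𝓝 x] fun _ ↦ (1 : ℝ)) (hx : x ∈ Ω) :
    HasFDerivAt f
      (∑ j, avgLim (n + 1) (testPartial j η) f x • EuclideanSpace.proj j : 𝔼 n →L[ℝ] ℝ) x := by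
  have hrate : ∀ x ∈ Ω, HasAvgRate n η f x := fun x hx ↦ hw.hasAvgRate_of_isBigO_one hf h hx
    (fun i ↦ (ha x hx i).continuousAt.tendsto.isBigO_one ℝ) (hb x hx)
  have heq : EqOn (avgLim n η f) f Ω :=
    Measure.eqOn_open_of_ae_eq
      ((ae_restrict_iff' Ω.isOpen.measurableSet).2 (ae_avgLim_eq hrate hf hη)) Ω.isOpen
      (fun x hx ↦ ((hrate x hx).holderAt_avgLim hf).continuousAt.continuousWithinAt) hfc
  refine ((hrate x hx).hasFDerivAt_avgLim hf fun j ↦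
    hw.hasAvgRate_testPartial hf h hx (ha x hx) (hb x hx) j).congr_of_eventuallyEq ?_
  filter_upwards [Ω.isOpen.mem_nhds hx] with y hy using (heq hy).symm

/-- `C¹` regularity with locally Hölder continuous gradient, i.e. `f ∈ C^{1,α}_loc` with a local
exponent `α`. -/
def C1HolderOn (f : 𝔼 n → ℝ) (Ω : Opens (𝔼 n)) : Prop :=
  ContDiffOn ℝ 1 f Ω ∧ ∀ x ∈ Ω, ∀ j, HolderAt (partialDeriv j f) x

lemma IsWeakPoisson.c1HolderOn (hw : IsWeakPoisson Ω f a b) (hf : Integrable f)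
    (hfc : ContinuousOn f Ω) (ha : ∀ x ∈ Ω, ∀ i, HolderAt (a i) x)
    (hb : ∀ x ∈ Ω, b =O[𝓝 x] fun _ ↦ (1 : ℝ)) : C1HolderOn f Ω := by
  obtain ⟨η, K, h, hη⟩ := exists_isScalePotential_integral_eq_one n
  have hderiv : ∀ x ∈ Ω, _ := fun x hx ↦ hw.hasFDerivAt hf hfc h hη ha hb hx
  have hholder : ∀ x ∈ Ω, ∀ j, HolderAt (avgLim (n + 1) (testPartial j η) f) x := fun x hx j ↦
    (hw.hasAvgRate_testPartial hf h hx (ha x hx) (hb x hx) j).holderAt_avgLim hf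
  refine ⟨contDiffOn_succ_of_hasFDerivAt (m := 0) Ω.isOpen hderiv fun j ↦ contDiffOn_zero.2
    fun x hx ↦ (hholder x hx j).continuousAt.continuousWithinAt, fun x hx j ↦
    (hholder x hx j).congr' ?_⟩
  filter_upwards [Ω.isOpen.mem_nhds hx] with y hy using
    (partialDeriv_eq_of_hasFDerivAt (hderiv y hy) j).symm

lemma IsWeakPoisson.contDiffOn_two (hw : IsWeakPoisson Ω f 0 b) (hf : Integrable f)
    (hfc : ContinuousOn f Ω) (hb : ∀ x ∈ Ω, HolderAt b x) : ContDiffOn ℝ 2 f Ω := by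
  obtain ⟨η, K, h, hη⟩ := exists_isScalePotential_integral_eq_one n
  have ha : ∀ x ∈ Ω, ∀ i : Fin n, HolderAt ((0 : Fin n → 𝔼 n → ℝ) i) x :=
    fun x _ i ↦ holderAt_of_contDiffAt contDiffAt_const
  have hb1 : ∀ x ∈ Ω, b =O[𝓝 x] fun _ ↦ (1 : ℝ) :=
    fun x hx ↦ (hb x hx).continuousAt.tendsto.isBigO_one ℝ
  have hderiv : ∀ x ∈ Ω, _ := fun x hx ↦ hw.hasFDerivAt hf hfc h hη ha hb1 hx
  have hrate : ∀ i j, ∀ x ∈ Ω, HasAvgRate (n + 2) (testPartial i (testPartial j η)) f x :=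
    fun i j x hx ↦ hw.hasAvgRate_testPartial_testPartial hf h hx (hb x hx) i j
  have hderiv₂ (j : Fin n) : ∀ x ∈ Ω, _ := fun x hx ↦
    (hw.hasAvgRate_testPartial hf h hx (ha x hx) (hb1 x hx) j).hasFDerivAt_avgLim hf
      fun i ↦ hrate i j x hx
  refine contDiffOn_succ_of_hasFDerivAt (m := 1) Ω.isOpen hderiv fun j ↦
    contDiffOn_succ_of_hasFDerivAt (m := 0) Ω.isOpen (hderiv₂ j) fun i ↦ contDiffOn_zero.2 ?_
  exact fun x hx ↦ ((hrate i j x hx).holderAt_avgLim hf).continuousAt.continuousWithinAt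

end WeakPoissonRegularity

section WeakSolutionRegularity

variable {Ω : Opens (𝔼 n)} {u : 𝔼 n → 𝔼 n} {f g h h' φ φ' : 𝔼 n → ℝ} {x : 𝔼 n}

lemma integrable_mul_of_integrableOn (hf : IntegrableOn f Ω) (hg : ContinuousOn g Ω)
    (hgc : HasCompactSupport g) (hgs : tsupport g ⊆ Ω) : Integrable (fun x ↦ f x * g x) := by
  have hg' : Continuous g := hg.continuous_of_tsupport_subset Ω.isOpen hgs
  obtain ⟨C, hC⟩ := hgc.exists_bound_of_continuous hg'
  refine (integrableOn_iff_integrable_of_support_subset ?_).1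
    (Integrable.mul_bdd hf hg'.aestronglyMeasurable (ae_of_all _ hC))
  exact (Function.support_mul_subset_right f g).trans ((subset_tsupport g).trans hgs)

lemma integrable_mul_mul_test (hf : IntegrableOn f Ω) (hg : ContinuousOn g Ω) (ψ : 𝓓(Ω, ℝ)) :
    Integrable (fun x ↦ f x * g x * ψ x) := by
  simp only [mul_assoc]
  exact integrable_mul_of_integrableOn hf (hg.mul ψ.continuous.continuousOn)
    ψ.hasCompactSupport.mul_left
    ((closure_mono (Function.support_mul_subset_right _ _)).trans ψ.tsupport_subset)

lemma IsWeakSol.congr (hw : IsWeakSol Ω u h φ) (hφ : φ' =ᵐ[volume] φ)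
    (hh : ∀ᵐ x, x ∈ Ω → h' x = h x) : IsWeakSol Ω u h' φ' := by
  intro ψ
  have hleft : ∫ x, φ' x * adjAdvDiff u ψ x = ∫ x, φ x * adjAdvDiff u ψ x :=
    integral_congr_ae (hφ.mul .rfl)
  have hright : ∫ x, h' x * ψ x = ∫ x, h x * ψ x := by
    refine integral_congr_ae ?_
    filter_upwards [hh] with x hx
    by_cases hxΩ : x ∈ Ω
    · rw [hx hxΩ]
    · rw [image_eq_zero_of_notMem_tsupport fun hxψ ↦ hxΩ (ψ.tsupport_subset hxψ), mul_zero,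
        mul_zero]
  rw [hleft, hright, hw ψ]

lemma IsWeakSol.isWeakPoisson (hw : IsWeakSol Ω u h φ) (hu : ContDiffOn ℝ 1 u Ω)
    (hφ : IntegrableOn φ Ω) (hh : IntegrableOn h Ω) :
    IsWeakPoisson Ω φ (fun i x ↦ φ x * u x i) fun x ↦ -(φ x * dvg u x + h x) := by
  intro ψ
  have hadj : Integrable fun x ↦ φ x * adjAdvDiff u ψ x :=
    integrable_mul_of_integrableOn hφ (continuous_adjAdvDiff hu ψ).continuousOn
      (hasCompactSupport_adjAdvDiff u ψ) ((tsupport_adjAdvDiff_subset u ψ).trans ψ.tsupport_subset)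
  have hdvg : Integrable fun x ↦ φ x * dvg u x * ψ x :=
    integrable_mul_mul_test hφ (continuousOn_dvg Ω.isOpen hu) ψ
  have hdrift (i : Fin n) : Integrable fun x ↦ φ x * u x i * partialDeriv i ψ x :=
    integrable_mul_mul_test hφ (contDiffOn_euclidean.1 hu i).continuousOn (testPartial i ψ)
  have hhψ : Integrable fun x ↦ h x * ψ x :=
    integrable_mul_of_integrableOn hh ψ.continuous.continuousOn ψ.hasCompactSupport
      ψ.tsupport_subset
  have hsum := integrable_finsetSum Finset.univ fun i _ ↦ hdrift i
  have hsub : Integrable fun x ↦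
      -(φ x * adjAdvDiff u ψ x) - ∑ i, φ x * u x i * partialDeriv i ψ x := hadj.neg.sub hsum
  calc ∫ x, φ x * lapl ψ x
      = ∫ x, -(φ x * adjAdvDiff u ψ x) - ∑ i, φ x * u x i * partialDeriv i ψ x
          - φ x * dvg u x * ψ x := by
        congr with x
        rw [adjAdvDiff, fderiv_apply_eq_sum_partialDeriv]
        simp only [mul_assoc, ← Finset.mul_sum]
        ring
    _ = -(∫ x, h x * ψ x) - ∑ i, (∫ x, φ x * u x i * partialDeriv i ψ x)
          - ∫ x, φ x * dvg u x * ψ x := by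
        rw [integral_sub hsub hdvg, integral_sub hadj.fun_neg hsum,
          integral_neg, hw ψ, integral_finsetSum _ fun i _ ↦ hdrift i]
    _ = (∫ x, -(φ x * dvg u x + h x) * ψ x) - ∑ i, ∫ x, φ x * u x i * partialDeriv i ψ x := by
        simp only [neg_mul, add_mul]
        rw [integral_neg, integral_add hdvg hhψ]
        ring

lemma IsWeakSol.isWeakPoisson_of_contDiffOn (hw : IsWeakSol Ω u h φ) (hu : ContDiffOn ℝ 1 u Ω)
    (hφ : ContDiffOn ℝ 1 φ Ω) (hh : ContinuousOn h Ω) :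
    IsWeakPoisson Ω φ 0 fun x ↦ fderiv ℝ φ x (u x) - h x := by
  intro ψ
  have hdvg : ContinuousOn (fun x ↦ φ x * dvg u x) Ω :=
    hφ.continuousOn.mul (continuousOn_dvg Ω.isOpen hu)
  have hgrad := continuousOn_fderiv_apply Ω.isOpen hu.continuousOn hφ
  have hdrift := integrable_mul_drift hu.continuousOn hφ.continuousOn ψ
  have hadj := integrable_mul_adjAdvDiff hu hφ.continuousOn ψ
  have hsub : Integrable fun x ↦
      -(φ x * adjAdvDiff u ψ x) - φ x * fderiv ℝ ψ x (u x) := hadj.neg.sub hdrift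
  calc ∫ x, φ x * lapl ψ x
      = ∫ x, -(φ x * adjAdvDiff u ψ x) - φ x * fderiv ℝ ψ x (u x) - φ x * dvg u x * ψ x := by
        congr with x
        rw [adjAdvDiff]
        ring
    _ = -(∫ x, h x * ψ x) + (∫ x, (φ x * dvg u x + fderiv ℝ φ x (u x)) * ψ x)
          - ∫ x, φ x * dvg u x * ψ x := by
        rw [integral_sub hsub (integrable_mul_test hdvg ψ),
          integral_sub hadj.fun_neg hdrift, integral_neg, hw ψ, integral_mul_drift hu hφ ψ,
          sub_neg_eq_add]
    _ = (∫ x, (fderiv ℝ φ x (u x) - h x) * ψ x) - ∑ i, ∫ x, (0 : Fin n → 𝔼 n → ℝ) i x *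
          partialDeriv i ψ x := by
        simp only [add_mul, sub_mul, Pi.zero_apply, zero_mul, integral_zero, Finset.sum_const_zero]
        rw [integral_add (integrable_mul_test hdvg ψ) (integrable_mul_test hgrad ψ),
          integral_sub (integrable_mul_test hgrad ψ) (integrable_mul_test hh ψ)]
        ring

lemma eqOn_of_forall_integral_mul_test_eq (hf : ContinuousOn f Ω) (hg : ContinuousOn g Ω)
    (h : ∀ ψ : 𝓓(Ω, ℝ), ∫ x, f x * ψ x = ∫ x, g x * ψ x) : EqOn f g Ω := by
  have hae : ∀ᵐ x, x ∈ (Ω : Set (𝔼 n)) → f x - g x = 0 := by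
    refine Ω.isOpen.ae_eq_zero_of_integral_contDiff_smul_eq_zero
      ((hf.sub hg).locallyIntegrableOn Ω.isOpen.measurableSet) fun ψ hψ hψc hψΩ ↦ ?_
    let χ : 𝓓(Ω, ℝ) := ⟨ψ, hψ, hψc, hψΩ⟩
    calc ∫ x, ψ x • (f x - g x) = ∫ x, f x * χ x - g x * χ x := by
          congr with x
          exact (mul_comm _ _).trans (sub_mul _ _ _)
      _ = 0 := by
          rw [integral_sub (integrable_mul_test hf χ) (integrable_mul_test hg χ), h χ, sub_self]
  have heq : f =ᵐ[volume.restrict Ω] g :=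
    (ae_restrict_iff' Ω.isOpen.measurableSet).2 (hae.mono fun x hx hxΩ ↦ sub_eq_zero.1 (hx hxΩ))
  exact Measure.eqOn_open_of_ae_eq heq Ω.isOpen hf hg

lemma le_of_ae_le_of_continuousOn (hf : ContinuousOn f Ω) (hg : ContinuousOn g Ω)
    (h : ∀ᵐ x, x ∈ Ω → f x ≤ g x) (hx : x ∈ Ω) : f x ≤ g x := by
  have hae : (fun x ↦ min (f x) (g x)) =ᵐ[volume.restrict Ω] f :=
    (ae_restrict_iff' Ω.isOpen.measurableSet).2 (h.mono fun x hx hxΩ ↦ min_eq_left (hx hxΩ))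
  exact min_eq_left_iff.1 (Measure.eqOn_open_of_ae_eq hae Ω.isOpen (hf.inf hg) hf hx)

lemma IsWeakSol.exists_c1HolderOn_ae_eq (hw : IsWeakSol Ω u h φ) (hu : ContDiffOn ℝ 1 u Ω)
    (hφ : Integrable φ) (hφ0 : ∀ x ∉ Ω, φ x = 0) (hφb : ∀ x ∈ Ω, φ =O[𝓝 x] fun _ ↦ (1 : ℝ))
    (hh : IntegrableOn h Ω) (hhb : ∀ x ∈ Ω, h =O[𝓝 x] fun _ ↦ (1 : ℝ)) :
    ∃ φ' : 𝔼 n → ℝ, φ' =ᵐ[volume] φ ∧ (∀ x ∉ Ω, φ' x = 0) ∧ C1HolderOn φ' Ω := by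
  have hui : ∀ x ∈ Ω, ∀ i, HolderAt (fun x ↦ u x i) x := fun x hx i ↦
    holderAt_of_contDiffAt ((contDiffOn_euclidean.1 hu i).contDiffAt (Ω.isOpen.mem_nhds hx))
  have hb {v : 𝔼 n → ℝ} (hv : ∀ x ∈ Ω, v =O[𝓝 x] fun _ ↦ (1 : ℝ)) (x : 𝔼 n) (hx : x ∈ Ω) :
      (fun x ↦ -(v x * dvg u x + h x)) =O[𝓝 x] fun _ ↦ (1 : ℝ) := by
    have hdvg : dvg u =O[𝓝 x] fun _ ↦ (1 : ℝ) :=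
      ((continuousOn_dvg Ω.isOpen hu).continuousAt (Ω.isOpen.mem_nhds hx)).tendsto.isBigO_one ℝ
    exact ((((hv x hx).mul hdvg).congr_right fun _ ↦ one_mul _).add (hhb x hx)).neg_left
  obtain ⟨φ', hae, hφ'0, hφ'⟩ :=
    (hw.isWeakPoisson hu hφ.integrableOn hh).exists_holderAt_ae_eq hφ hφ0
      (fun x hx i ↦ ((hφb x hx).mul ((hui x hx i).continuousAt.tendsto.isBigO_one ℝ)).congr_right
        fun _ ↦ one_mul _) (hb hφb)
  have hφ'i : Integrable φ' := hφ.congr hae.symm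
  have hw' : IsWeakSol Ω u h φ' := hw.congr hae (ae_of_all _ fun _ _ ↦ rfl)
  exact ⟨φ', hae, hφ'0, (hw'.isWeakPoisson hu hφ'i.integrableOn hh).c1HolderOn hφ'i
    (fun x hx ↦ (hφ' x hx).continuousAt.continuousWithinAt)
    (fun x hx i ↦ (hφ' x hx).mul (hui x hx i))
    (hb fun x hx ↦ (hφ' x hx).continuousAt.tendsto.isBigO_one ℝ)⟩

lemma IsWeakSol.contDiffOn_two (hw : IsWeakSol Ω u h φ) (hu : ContDiffOn ℝ 1 u Ω)
    (hφi : Integrable φ) (hφ : C1HolderOn φ Ω) (hh : ∀ x ∈ Ω, HolderAt h x) :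
    ContDiffOn ℝ 2 φ Ω := by
  refine (hw.isWeakPoisson_of_contDiffOn hu hφ.1
    fun x hx ↦ (hh x hx).continuousAt.continuousWithinAt).contDiffOn_two hφi hφ.1.continuousOn
      fun x hx ↦ ?_
  simp only [fderiv_apply_eq_sum_partialDeriv, sub_eq_add_neg]
  refine (HolderAt.sum _ fun i ↦ .mul ?_ (hφ.2 x hx i)).add (hh x hx).neg
  exact holderAt_of_contDiffAt
    ((contDiffOn_euclidean.1 hu i).contDiffAt (Ω.isOpen.mem_nhds hx))

lemma IsWeakSol.advDiff_eq (hw : IsWeakSol Ω u h φ) (hu : ContDiffOn ℝ 1 u Ω)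
    (hφ : ContDiffOn ℝ 2 φ Ω) (hh : ContinuousOn h Ω) (hx : x ∈ Ω) : advDiff u φ x = h x := by
  have hcont : ContinuousOn (advDiff u φ) Ω := by
    simp only [funext (_root_.advDiff_eq u φ)]
    exact (continuousOn_lapl Ω.isOpen hφ).neg.add
      (continuousOn_fderiv_apply Ω.isOpen hu.continuousOn (hφ.of_le (by norm_num)))
  exact eqOn_of_forall_integral_mul_test_eq hcont hh
    (fun ψ ↦ by rw [← integral_mul_adjAdvDiff hu hφ ψ, hw ψ]) hx

end WeakSolutionRegularity

section Semilinear

variable {Ω : Opens (𝔼 n)} {u : 𝔼 n → 𝔼 n} {h v φ φ' σ τ : 𝔼 n → ℝ} {G : 𝔼 n → ℝ → ℝ}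
  {F : ℕ → 𝔼 n → ℝ} {M : ℝ} {x : 𝔼 n} {k : ℕ}

lemma IsDominated.norm_le (hφ : IsDominated Ω σ φ) (hx : x ∈ Ω) : ‖φ x‖ ≤ ‖σ x‖ := by
  obtain ⟨h0, hσ⟩ := hφ.mem_Icc x hx
  rw [Real.norm_of_nonneg h0]
  exact hσ.trans (Real.le_norm_self _)

lemma IsDominated.measurable (hφ : IsDominated Ω σ φ) (hc : ContinuousOn φ Ω) :
    Measurable φ := by
  have hind : (Ω : Set (𝔼 n)).indicator φ = φ :=
    indicator_eq_self.2 fun x hx ↦ by_contra fun hxΩ ↦ hx (hφ.eq_zero x hxΩ)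
  exact hind ▸ measurable_indicator Ω.isOpen.measurableSet hc

lemma IsDominated.integrable (hφ : IsDominated Ω σ φ) (hΩ : Bornology.IsBounded (Ω : Set (𝔼 n)))
    (hσ : ContinuousOn σ (closure Ω)) (hφm : Measurable φ) : Integrable φ := by
  have hσi : IntegrableOn σ Ω := memLp_one_iff_integrable.1 (memLp_of_continuousOn_closure hΩ hσ)
  refine (integrableOn_iff_integrable_of_support_subset fun x hx ↦ ?_).1
    (hσi.norm.mono' hφm.aestronglyMeasurable
      ((ae_restrict_mem Ω.isOpen.measurableSet).mono fun x hx ↦ hφ.norm_le hx))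
  exact by_contra fun hxΩ ↦ hx (hφ.eq_zero x hxΩ)

lemma IsDominated.continuousOn_closure (hφ : IsDominated Ω σ φ) (hc : ContinuousOn φ Ω)
    (hσ : ContinuousOn σ (closure Ω)) (hσ0 : ∀ x ∈ frontier (Ω : Set (𝔼 n)), σ x = 0) :
    ContinuousOn φ (closure Ω) := by
  intro x hx
  by_cases hxΩ : x ∈ Ω
  · exact (hc.continuousAt (Ω.isOpen.mem_nhds hxΩ)).continuousWithinAt
  have hfrontier {y : 𝔼 n} (hy : y ∈ closure (Ω : Set (𝔼 n))) (hyΩ : y ∉ Ω) : σ y = 0 :=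
    hσ0 y ⟨hy, by rwa [Ω.isOpen.interior_eq]⟩
  have hlim : Tendsto σ (𝓝[closure Ω] x) (𝓝 0) := hfrontier hx hxΩ ▸ hσ x hx
  rw [ContinuousWithinAt, hφ.eq_zero x hxΩ]
  refine squeeze_zero_norm' ?_ (tendsto_zero_iff_norm_tendsto_zero.1 hlim)
  filter_upwards [self_mem_nhdsWithin] with y hy
  by_cases hyΩ : y ∈ Ω
  · exact hφ.norm_le hyΩ
  · rw [hφ.eq_zero y hyΩ, hfrontier hy hyΩ]

lemma IsDominated.congr_ae (hφ : IsDominated Ω σ φ) (hae : φ' =ᵐ[volume] φ)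
    (hc : ContinuousOn φ' Ω) (h0 : ∀ x ∉ Ω, φ' x = 0) (hσ : ContinuousOn σ Ω) :
    IsDominated Ω σ φ' where
  mem_Icc _ hx :=
    ⟨le_of_ae_le_of_continuousOn (f := 0) continuousOn_const hc
      (hae.mono fun _ h hx ↦ h ▸ (hφ.mem_Icc _ hx).1) hx,
    le_of_ae_le_of_continuousOn hc hσ (hae.mono fun _ h hx ↦ h ▸ (hφ.mem_Icc _ hx).2) hx⟩
  eq_zero := h0

lemma IsDominated.of_tendsto (hF : ∀ k, IsDominated Ω σ (F k))
    (hlim : ∀ x, Tendsto (fun k ↦ F k x) atTop (𝓝 (φ x))) : IsDominated Ω σ φ where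
  mem_Icc x hx := isClosed_Icc.mem_of_tendsto (hlim x)
    (Eventually.of_forall fun k ↦ (hF k).mem_Icc x hx)
  eq_zero x hx := tendsto_nhds_unique (hlim x) (by simp [(hF _).eq_zero x hx])

lemma contDiffOn_nemytskii (hG : ContDiffOn ℝ 1 (Function.uncurry G) (Ω ×ˢ univ))
    (hφ : ContDiffOn ℝ 1 φ Ω) : ContDiffOn ℝ 1 (fun x ↦ G x (φ x)) Ω :=
  hG.comp (contDiffOn_id.prodMk hφ) fun _ hx ↦ ⟨hx, mem_univ _⟩

lemma aestronglyMeasurable_nemytskii (hG : ContinuousOn (Function.uncurry G) (Ω ×ˢ univ))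
    (hφ : Measurable φ) :
    AEStronglyMeasurable (fun x ↦ G x (φ x)) (volume.restrict Ω) := by
  have hmeas := (measurable_indicator (Ω.isOpen.prod isOpen_univ).measurableSet hG).comp
    (measurable_id.prodMk hφ)
  refine hmeas.aestronglyMeasurable.congr ?_
  filter_upwards [ae_restrict_mem Ω.isOpen.measurableSet] with x hx
  exact indicator_of_mem (mk_mem_prod hx (mem_univ (φ x))) (Function.uncurry G)

lemma IsWeakSol.exists_isDirichletSol_ae_eq (hw : IsWeakSol Ω u (fun x ↦ G x (φ x)) φ)
    (hΩ : Bornology.IsBounded (Ω : Set (𝔼 n))) (hu : ContDiffOn ℝ 1 u Ω)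
    (hσ : ContinuousOn σ (closure Ω)) (hσ0 : ∀ x ∈ frontier (Ω : Set (𝔼 n)), σ x = 0)
    (hφm : Measurable φ) (hφ : IsDominated Ω σ φ)
    (hG : ContDiffOn ℝ 1 (Function.uncurry G) (Ω ×ˢ univ))
    (hGM : ∀ x ∈ Ω, ‖G x (φ x)‖ ≤ M) :
    ∃ φ', φ' =ᵐ[volume] φ ∧ IsDominated Ω σ φ' ∧ IsDirichletSol Ω u (fun x ↦ G x (φ' x)) φ' := by
  have hφi : Integrable φ := hφ.integrable hΩ hσ hφm
  have hGi : IntegrableOn (fun x ↦ G x (φ x)) Ω :=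
    (integrableOn_const hΩ.measure_lt_top.ne (C := M)).mono'
      (aestronglyMeasurable_nemytskii hG.continuousOn hφm)
      ((ae_restrict_mem Ω.isOpen.measurableSet).mono hGM)
  have hφb (x : 𝔼 n) (hx : x ∈ Ω) : φ =O[𝓝 x] fun _ ↦ (1 : ℝ) :=
    (Asymptotics.IsBigO.of_bound' ((Ω.isOpen.eventually_mem hx).mono fun _ hy ↦
      hφ.norm_le hy)).trans
      (((hσ.mono subset_closure).continuousAt (Ω.isOpen.mem_nhds hx)).tendsto.isBigO_one ℝ)
  have hGb (x : 𝔼 n) (hx : x ∈ Ω) : (fun x ↦ G x (φ x)) =O[𝓝 x] fun _ ↦ (1 : ℝ) :=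
    .of_bound M ((Ω.isOpen.eventually_mem hx).mono fun y hy ↦ by simpa using hGM y hy)
  obtain ⟨φ', hae, h0, hφ'⟩ := hw.exists_c1HolderOn_ae_eq hu hφi hφ.eq_zero hφb hGi hGb
  have hGφ' := contDiffOn_nemytskii hG hφ'.1
  have hw' : IsWeakSol Ω u (fun x ↦ G x (φ' x)) φ' := hw.congr hae (hae.mono fun x h _ ↦ by rw [h])
  have hφ'C2 : ContDiffOn ℝ 2 φ' Ω := hw'.contDiffOn_two hu (hφi.congr hae.symm) hφ' fun x hx ↦
    holderAt_of_contDiffAt (hGφ'.contDiffAt (Ω.isOpen.mem_nhds hx))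
  have hdom := hφ.congr_ae hae hφ'C2.continuousOn h0 (hσ.mono subset_closure)
  exact ⟨φ', hae, hdom, hφ'C2, hdom.continuousOn_closure hφ'C2.continuousOn hσ hσ0,
    fun x hx ↦ hw'.advDiff_eq hu hφ'C2 hGφ'.continuousOn hx, fun x hx ↦ h0 x fun hxΩ ↦
      hx.2 (by rwa [Ω.isOpen.interior_eq])⟩

lemma IsDirichletSol.isWeakSol (hφ : IsDirichletSol Ω u h φ) (hu : ContDiffOn ℝ 1 u Ω) :
    IsWeakSol Ω u h φ := by
  intro ψ
  rw [integral_mul_adjAdvDiff hu hφ.contDiffOn ψ]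
  congr with x
  by_cases hx : x ∈ Ω
  · rw [hφ.advDiff_eq x hx]
  · rw [image_eq_zero_of_notMem_tsupport fun hxψ ↦ hx (ψ.tsupport_subset hxψ), mul_zero, mul_zero]

lemma exists_isDirichletSol (hΩ : Bornology.IsBounded (Ω : Set (𝔼 n)))
    (hu : ContDiffOn ℝ 1 u Ω) (hτ : IsDirichletSol Ω u 1 τ) (hM : 0 ≤ M)
    (hh : ContDiffOn ℝ 1 h Ω) (hhM : ∀ x ∈ Ω, h x ∈ Icc 0 M) :
    ∃ φ, IsDominated Ω (M • τ) φ ∧ IsDirichletSol Ω u h φ := by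
  obtain ⟨φ, hφm, hφ, hw⟩ := exists_isWeakSol hΩ hu hτ hM hh.continuousOn hhM
  obtain ⟨φ', -, hφ'⟩ := IsWeakSol.exists_isDirichletSol_ae_eq (G := fun x _ ↦ h x) hw hΩ hu
    (hτ.continuousOn.const_smul M) (fun x hx ↦ by simp [hτ.eq_zero x hx]) hφm hφ
    (hh.comp contDiffOn_fst fun p hp ↦ hp.1)
    fun x hx ↦ (Real.norm_of_nonneg (hhM x hx).1).trans_le (hhM x hx).2
  exact ⟨φ', hφ'⟩

/-- The monotone iteration for `-Δφ + ⟨u, ∇φ⟩ = G(x, φ)` started at `0`, with all iterates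
dominated by `σ`. -/
structure IsMonotoneIteration (Ω : Opens (𝔼 n)) (u : 𝔼 n → 𝔼 n) (G : 𝔼 n → ℝ → ℝ)
    (σ : 𝔼 n → ℝ) (F : ℕ → 𝔼 n → ℝ) : Prop where
  zero : F 0 = 0
  isDominated : ∀ k, IsDominated Ω σ (F k)
  isDirichletSol : ∀ k, IsDirichletSol Ω u (fun x ↦ G x (F k x)) (F (k + 1))

lemma mem_Icc_of_isDominated (hGmono : ∀ x ∈ Ω, MonotoneOn (G x) (Ici 0))
    (hG0 : ∀ x ∈ Ω, 0 ≤ G x 0) (hGM : ∀ x ∈ Ω, G x (σ x) ≤ M) (hφ : IsDominated Ω σ φ)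
    (hx : x ∈ Ω) : G x (φ x) ∈ Icc 0 M := by
  obtain ⟨h0, hσ⟩ := hφ.mem_Icc x hx
  exact ⟨(hG0 x hx).trans (hGmono x hx self_mem_Ici h0 h0),
    (hGmono x hx h0 (h0.trans hσ) hσ).trans (hGM x hx)⟩

lemma exists_isMonotoneIteration (hΩ : Bornology.IsBounded (Ω : Set (𝔼 n)))
    (hu : ContDiffOn ℝ 1 u Ω) (hτ : IsDirichletSol Ω u 1 τ) (hM : 0 ≤ M)
    (hG : ContDiffOn ℝ 1 (Function.uncurry G) (Ω ×ˢ univ))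
    (hGM : ∀ φ, IsDominated Ω (M • τ) φ → ∀ x ∈ Ω, G x (φ x) ∈ Icc 0 M) :
    ∃ F, IsMonotoneIteration Ω u G (M • τ) F := by
  let Iterate := {φ : 𝔼 n → ℝ // ContDiffOn ℝ 1 φ Ω ∧ IsDominated Ω (M • τ) φ}
  have hstep (φ : Iterate) : ∃ φ' : Iterate, IsDirichletSol Ω u (fun x ↦ G x (φ.1 x)) φ'.1 := by
    obtain ⟨φ', hdom, hφ'⟩ := exists_isDirichletSol hΩ hu hτ hM
      (contDiffOn_nemytskii hG φ.2.1) (hGM φ.1 φ.2.2)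
    exact ⟨⟨φ', hφ'.contDiffOn.of_le (by norm_num), hdom⟩, hφ'⟩
  choose next hnext using hstep
  let F₀ : Iterate := ⟨0, contDiffOn_const, fun x hx ↦
    ⟨le_rfl, mul_nonneg hM (hτ.nonneg hΩ (subset_closure hx))⟩, fun _ _ ↦ rfl⟩
  exact ⟨fun k ↦ (next^[k] F₀).1, rfl, fun k ↦ (next^[k] F₀).2.2, fun k ↦ by
    simp only [Function.iterate_succ_apply']
    exact hnext _⟩

lemma IsMonotoneIteration.le (hF : IsMonotoneIteration Ω u G σ F)
    (hΩ : Bornology.IsBounded (Ω : Set (𝔼 n))) (hτ : IsDirichletSol Ω u 1 τ)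
    (hGmono : ∀ x ∈ Ω, MonotoneOn (G x) (Ici 0))
    (hv : IsDirichletSol Ω u (fun x ↦ G x (v x)) v) (hv0 : ∀ x ∈ Ω, 0 ≤ v x) (k : ℕ)
    (hx : x ∈ Ω) : F k x ≤ v x := by
  induction k generalizing x with
  | zero => exact (congrFun hF.zero x).trans_le (hv0 x hx)
  | succ k ih =>
    exact hτ.le_of_le hΩ (hF.isDirichletSol k) hv
      (fun y hy ↦ hGmono y hy ((hF.isDominated k).mem_Icc y hy).1 (hv0 y hy) (ih hy))
      (subset_closure hx)

lemma IsMonotoneIteration.monotone (hF : IsMonotoneIteration Ω u G σ F)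
    (hΩ : Bornology.IsBounded (Ω : Set (𝔼 n))) (hτ : IsDirichletSol Ω u 1 τ)
    (hGmono : ∀ x ∈ Ω, MonotoneOn (G x) (Ici 0)) (hx : x ∈ Ω) :
    Monotone fun k ↦ F k x := by
  refine monotone_nat_of_le_succ fun k ↦ ?_
  induction k generalizing x with
  | zero => exact (congrFun hF.zero x).trans_le ((hF.isDominated 1).mem_Icc x hx).1
  | succ k ih =>
    exact hτ.le_of_le hΩ (hF.isDirichletSol k) (hF.isDirichletSol (k + 1))
      (fun y hy ↦ hGmono y hy ((hF.isDominated k).mem_Icc y hy).1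
        ((hF.isDominated (k + 1)).mem_Icc y hy).1 (ih hy)) (subset_closure hx)

lemma IsMonotoneIteration.contDiffOn (hF : IsMonotoneIteration Ω u G σ F) (k : ℕ) :
    ContDiffOn ℝ 2 (F k) Ω := by
  cases k with
  | zero => exact hF.zero ▸ contDiffOn_const
  | succ k => exact (hF.isDirichletSol k).contDiffOn

lemma IsMonotoneIteration.exists_tendsto (hF : IsMonotoneIteration Ω u G σ F)
    (hΩ : Bornology.IsBounded (Ω : Set (𝔼 n))) (hτ : IsDirichletSol Ω u 1 τ)
    (hGmono : ∀ x ∈ Ω, MonotoneOn (G x) (Ici 0)) :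
    ∃ φ, Measurable φ ∧ IsDominated Ω σ φ ∧ ∀ x, Tendsto (fun k ↦ F k x) atTop (𝓝 (φ x)) := by
  have hlim (x : 𝔼 n) : ∃ l, Tendsto (fun k ↦ F k x) atTop (𝓝 l) := by
    by_cases hx : x ∈ Ω
    · exact ⟨_, tendsto_atTop_ciSup (hF.monotone hΩ hτ hGmono hx)
        ⟨σ x, forall_mem_range.2 fun k ↦ ((hF.isDominated k).mem_Icc x hx).2⟩⟩
    · exact ⟨0, by simp [(hF.isDominated _).eq_zero x hx]⟩
  choose φ hφ using hlim
  exact ⟨φ, measurable_of_tendsto_metrizable (fun k ↦ (hF.isDominated k).measurable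
    (hF.contDiffOn k).continuousOn) (tendsto_pi_nhds.2 hφ), .of_tendsto hF.isDominated hφ, hφ⟩

lemma tendsto_integral_mul_of_dominated {f : 𝔼 n → ℝ} (hF : ∀ k, ∀ x ∈ Ω, ‖F k x‖ ≤ ‖σ x‖)
    (hlim : ∀ x ∈ Ω, Tendsto (fun k ↦ F k x) atTop (𝓝 (φ x))) (hf : ∀ x ∉ Ω, f x = 0)
    (hFf : ∀ k, Integrable fun x ↦ F k x * f x) (hσf : Integrable fun x ↦ σ x * f x) :
    Tendsto (fun k ↦ ∫ x, F k x * f x) atTop (𝓝 (∫ x, φ x * f x)) := by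
  refine tendsto_integral_of_dominated_convergence (fun x ↦ ‖σ x * f x‖)
    (fun k ↦ (hFf k).aestronglyMeasurable) hσf.norm (fun k ↦ ae_of_all _ fun x ↦ ?_)
    (ae_of_all _ fun x ↦ ?_)
  · by_cases hx : x ∈ Ω
    · simp only [norm_mul]
      gcongr
      exact hF k x hx
    · simp [hf x hx]
  · by_cases hx : x ∈ Ω
    · exact (hlim x hx).mul_const _
    · simp [hf x hx]

lemma IsMonotoneIteration.isWeakSol_of_tendsto (hF : IsMonotoneIteration Ω u G σ F)
    (hu : ContDiffOn ℝ 1 u Ω) (hσ : ContinuousOn σ Ω)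
    (hG : ContDiffOn ℝ 1 (Function.uncurry G) (Ω ×ˢ univ))
    (hGM : ∀ k, ∀ x ∈ Ω, ‖G x (F k x)‖ ≤ M)
    (hlim : ∀ x, Tendsto (fun k ↦ F k x) atTop (𝓝 (φ x))) :
    IsWeakSol Ω u (fun x ↦ G x (φ x)) φ := by
  intro ψ
  have hψ (x : 𝔼 n) (hx : x ∉ Ω) : ψ x = 0 :=
    image_eq_zero_of_notMem_tsupport fun hxψ ↦ hx (ψ.tsupport_subset hxψ)
  have hadj (x : 𝔼 n) (hx : x ∉ Ω) : adjAdvDiff u ψ x = 0 :=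
    image_eq_zero_of_notMem_tsupport fun hxψ ↦
      hx (ψ.tsupport_subset (tsupport_adjAdvDiff_subset u ψ hxψ))
  have hlhs := tendsto_integral_mul_of_dominated (F := fun k ↦ F (k + 1))
    (fun k x hx ↦ (hF.isDominated (k + 1)).norm_le hx)
    (fun x _ ↦ (hlim x).comp (tendsto_add_atTop_nat 1)) hadj
    (fun k ↦ integrable_mul_adjAdvDiff hu (hF.contDiffOn _).continuousOn ψ)
    (integrable_mul_adjAdvDiff hu hσ ψ)
  have hGlim (x : 𝔼 n) (hx : x ∈ Ω) :
      Tendsto (fun k ↦ G x (F k x)) atTop (𝓝 (G x (φ x))) :=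
    ((hG.continuousOn.continuousAt ((Ω.isOpen.prod isOpen_univ).mem_nhds
      (mk_mem_prod hx (mem_univ (φ x))))).tendsto).comp (tendsto_const_nhds.prodMk_nhds (hlim x))
  have hrhs := tendsto_integral_mul_of_dominated (F := fun k x ↦ G x (F k x)) (σ := fun _ ↦ M)
    (fun k x hx ↦ (hGM k x hx).trans (Real.le_norm_self _)) hGlim hψ
    (fun k ↦ integrable_mul_test
      (contDiffOn_nemytskii hG ((hF.contDiffOn k).of_le (by norm_num))).continuousOn ψ)
    (integrable_mul_test continuousOn_const ψ)
  simp only [fun k ↦ (hF.isDirichletSol k).isWeakSol hu ψ] at hlhs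
  exact tendsto_nhds_unique hlhs hrhs

theorem exists_minimal_isDirichletSol (hΩ : Bornology.IsBounded (Ω : Set (𝔼 n)))
    (hu : ContDiffOn ℝ 1 u Ω) (hτ : IsDirichletSol Ω u 1 τ) (hM : 0 ≤ M)
    (hG : ContDiffOn ℝ 1 (Function.uncurry G) (Ω ×ˢ univ))
    (hGmono : ∀ x ∈ Ω, MonotoneOn (G x) (Ici 0)) (hG0 : ∀ x ∈ Ω, 0 ≤ G x 0)
    (hGM : ∀ x ∈ Ω, G x (M * τ x) ≤ M) :
    ∃ φ, IsDirichletSol Ω u (fun x ↦ G x (φ x)) φ ∧ (∀ x ∈ Ω, 0 ≤ φ x) ∧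
      ∀ v, IsDirichletSol Ω u (fun x ↦ G x (v x)) v → (∀ x ∈ Ω, 0 ≤ v x) →
        ∀ x ∈ Ω, φ x ≤ v x := by
  have hGdom (φ : 𝔼 n → ℝ) (hφ : IsDominated Ω (M • τ) φ) (x : 𝔼 n) (hx : x ∈ Ω) :
      G x (φ x) ∈ Icc 0 M := mem_Icc_of_isDominated hGmono hG0 hGM hφ hx
  have hGnorm (φ : 𝔼 n → ℝ) (hφ : IsDominated Ω (M • τ) φ) (x : 𝔼 n) (hx : x ∈ Ω) :
      ‖G x (φ x)‖ ≤ M :=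
    (Real.norm_of_nonneg (hGdom φ hφ x hx).1).trans_le (hGdom φ hφ x hx).2
  have hσ : ContinuousOn (M • τ) (closure Ω) := hτ.continuousOn.const_smul M
  obtain ⟨F, hF⟩ := exists_isMonotoneIteration hΩ hu hτ hM hG hGdom
  obtain ⟨φ, hφm, hφ, hlim⟩ := hF.exists_tendsto hΩ hτ hGmono
  have hw := hF.isWeakSol_of_tendsto hu (hσ.mono subset_closure) hG
    (fun k ↦ hGnorm _ (hF.isDominated k)) hlim
  obtain ⟨φ', hae, hφ'dom, hφ'⟩ := hw.exists_isDirichletSol_ae_eq hΩ hu hσ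
    (fun x hx ↦ by simp [hτ.eq_zero x hx]) hφm hφ hG (hGnorm φ hφ)
  refine ⟨φ', hφ', fun x hx ↦ (hφ'dom.mem_Icc x hx).1, fun v hv hv0 x hx ↦ ?_⟩
  refine le_of_ae_le_of_continuousOn hφ'.contDiffOn.continuousOn hv.contDiffOn.continuousOn ?_ hx
  filter_upwards [hae] with y hy hyΩ
  exact hy ▸ le_of_tendsto' (hlim y) fun k ↦ hF.le hΩ hτ hGmono hv hv0 k hyΩ

end Semilinear

theorem minimal_solution_below_exit_time_bound_general {g : ℝ → ℝ} (hg : ContDiff ℝ 1 g)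
    (hg0 : 0 ≤ g 0) (hgmono : MonotoneOn g (Ici 0)) :
    ∃ C : ℝ, 0 < C ∧
      ∀ (n : ℕ) (Ω : Opens (𝔼 n)), Bornology.IsBounded (Ω : Set (𝔼 n)) →
        ∀ u : 𝔼 n → 𝔼 n, ContDiffOn ℝ 1 u Ω → ∀ τ : 𝔼 n → ℝ, IsDirichletSol Ω u 1 τ →
          ∀ θ ∈ upperBounds (τ '' Ω), ∀ lam : ℝ, 0 < lam → lam ≤ C / θ →
            ∃ φ, IsMinimalSol Ω u g lam φ := by
  have hg1 : 0 < g 1 + 1 :=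
    add_pos_of_nonneg_of_pos (hg0.trans (hgmono self_mem_Ici (zero_le_one' ℝ) zero_le_one)) one_pos
  refine ⟨1 / (g 1 + 1), by positivity, fun n Ω hΩ u hu τ hτ θ hθ lam hlam hle ↦ ?_⟩
  have hθ0 : 0 < θ := (div_pos_iff_of_pos_left (by positivity)).1 (hlam.trans_le hle)
  have hbound (x : 𝔼 n) (hx : x ∈ Ω) : lam * g (θ⁻¹ * τ x) ≤ θ⁻¹ := by
    have hτ0 : 0 ≤ θ⁻¹ * τ x := mul_nonneg (by positivity) (hτ.nonneg hΩ (subset_closure hx))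
    have hτ1 : θ⁻¹ * τ x ≤ 1 := inv_mul_le_one_of_le₀ (hθ (mem_image_of_mem τ hx)) hθ0.le
    calc lam * g (θ⁻¹ * τ x) ≤ lam * (g 1 + 1) := by
          gcongr
          exact (hgmono hτ0 (zero_le_one' ℝ) hτ1).trans (lt_add_one _).le
      _ ≤ 1 / (g 1 + 1) / θ * (g 1 + 1) := by gcongr
      _ = θ⁻¹ := by field_simp
  obtain ⟨φ, hφ, hφ0, hmin⟩ := exists_minimal_isDirichletSol (G := fun _ s ↦ lam * g s) hΩ hu hτ
    (inv_nonneg.2 hθ0.le) (contDiff_const.mul (hg.comp contDiff_snd)).contDiffOn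
    (fun _ _ ↦ (monotone_mul_left_of_nonneg hlam.le).comp_monotoneOn hgmono)
    (fun _ _ ↦ mul_nonneg hlam.le hg0) hbound
  exact ⟨φ, ⟨isClassicalSol_iff.2 hφ, hφ0⟩,
    fun v hv ↦ hmin v (isClassicalSol_iff.1 hv.1) hv.2⟩

/-- There is a constant `C > 0` depending only on the nonlinearity `g`
(not on the domain or the flow) such that whenever `τ` solves the exit-time problem
`-Δτ + ⟨u, ∇τ⟩ = 1` in `Ω`, `τ = 0` on `∂Ω`, with maximum `θ` over the closure of `Ω`,
the explosion problem admits a minimal nonnegative classical solution for every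
`λ ∈ (0, C/θ]`. -/
theorem minimal_solution_below_exit_time_bound (g : ℝ → ℝ)
    (hg : ContDiff ℝ 2 g) (hg0 : 0 < g 0)
    (hgmono : StrictMonoOn g (Ici 0)) (hgconv : ConvexOn ℝ (Ici 0) g) :
    ∃ C : ℝ, 0 < C ∧
      ∀ (n : ℕ) (Ω : Set (EuclideanSpace ℝ (Fin n))),
        IsOpen Ω → IsConnected Ω → Bornology.IsBounded Ω →
        ∀ u : EuclideanSpace ℝ (Fin n) → EuclideanSpace ℝ (Fin n),
          ContDiffOn ℝ 1 u (closure Ω) →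
          ∀ τ : EuclideanSpace ℝ (Fin n) → ℝ,
            (∀ x ∈ Ω, ContDiffAt ℝ 2 τ x) →
            ContinuousOn τ (closure Ω) →
            (∀ x ∈ Ω, -lapl τ x + ⟪u x, gradient τ x⟫ = 1) →
            (∀ x ∈ frontier Ω, τ x = 0) →
            ∀ θ : ℝ, IsGreatest (τ '' closure Ω) θ →
              ∀ lam : ℝ, 0 < lam → lam ≤ C / θ →
                ∃ φ, IsMinimalSol Ω u g lam φ := by
  have hg1 : ContDiff ℝ 1 g := hg.of_le (by norm_num)
  obtain ⟨C, hC, hsol⟩ :=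
    minimal_solution_below_exit_time_bound_general hg1 hg0.le hgmono.monotoneOn
  refine ⟨C, hC, fun n Ω hΩ _ hΩb u hu τ hτ hτc hτL hτ0 θ hθ lam hlam hle ↦ ?_⟩
  exact hsol n ⟨Ω, hΩ⟩ hΩb u (hu.mono subset_closure) τ
    ⟨hΩ.contDiffOn_iff.2 fun {x} hx ↦ hτ x hx, hτc, hτL, hτ0⟩ θ
    (upperBounds_mono_set (image_mono subset_closure) hθ.2) lam hlam hle
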